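/- Let K be a field of characteristic zero, let n ≥ 1 and M ≥ 1 be integers, let ζ_j = (ζ_{j,1},…,ζ_{j,n}) ∈ Kⁿ for j = 1,…,M, let d₁ ≥ d₂ ≥ ⋯ ≥ dₙ > 0 be integers, let t₁,…,t_M ∈ [0,∞), and let P ∈ K[x₁,…,xₙ] be a nonzero polynomial. Assume: (i) ζ_{j,i} ≠ ζ_{j',i} for all j ≠ j' and all i = 1,…,n; (ii) P has degree at most d_i in x_i for each i; and (iii) t_d(P, ζ_j) = t_j for all j = 1,…,M. Then Σ_{j=1}^M Vol_n(t_j) ≤ ∏_{i=1}^n ( 1 + max{M−2, 0}·Σ_{l=i+1}^n d_l/d_i ). (Theorem 10.5, Dyson's lemma of Esnault–Viehweg, as stated in the paper over an arbitrary field of characteristic zero.) -/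

import Mathlib

/-- `Vol n τ` is the Lebesgue measure of
`{(x₁, …, xₙ) ∈ [0,1]ⁿ : x₁ + ⋯ + xₙ < τ}`. -/
noncomputable def Vol (n : ℕ) (τ : ℝ) : ℝ :=
  (MeasureTheory.volume
    {x : Fin n → ℝ | (∀ i, x i ∈ Set.Icc (0 : ℝ) 1) ∧ ∑ i, x i < τ}).toReal

/-- The index `t_d(P, ζ)` of a polynomial `P ∈ K[x₁, …, xₙ]` at a point
`ζ ∈ Kⁿ` with respect to weights `d = (d₁, …, dₙ)`: writing
`P = Σ_k a_k (x₁ − ζ₁)^{k₁} ⋯ (xₙ − ζₙ)^{kₙ}`, it is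
`min { k₁/d₁ + ⋯ + kₙ/dₙ : a_k ≠ 0 }`.  The Taylor coefficient `a_k` is the
coefficient of `x^k` in `P(x + ζ)`, i.e. in the image of `P` under the
substitution `xᵢ ↦ xᵢ + ζᵢ`. -/
noncomputable def polyIndex {K : Type*} [CommRing K] {n : ℕ} (d : Fin n → ℕ)
    (P : MvPolynomial (Fin n) K) (ζ : Fin n → K) : ℝ :=
  sInf {t : ℝ | ∃ k : Fin n →₀ ℕ,
    MvPolynomial.coeff k
      (MvPolynomial.bind₁
        (fun i => MvPolynomial.X i + MvPolynomial.C (ζ i)) P) ≠ 0 ∧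
    t = ∑ i, (k i : ℝ) / (d i : ℝ)}

/-!
Let `e i = d i + m * ∑ l > i, d l` with `m = max (M - 2) 0`. The bound is a dimension count: we show
that, for large `Θ`, the polynomials of degree at most `Θ * e i + O(1)` in each variable `X i` have
arbitrary Taylor coefficients of index less than `Θ * t j` at all the points `ζ j` simultaneously,
and then divide the number of these coefficients and the dimension by `Θ ^ n * ∏ i, d i`.

For the interpolation, let `J` be the ideal of polynomials of index at least `t j` at each `ζ j`. It
contains `P` and is stable under the operators `∏ j, (X i - ζ j i) * ∂ / ∂ X i`, which, corrected by
a multiple of the polynomial itself, raise the degree in `X i` by `m` only. Hence the members of `J`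
of degrees at most `e` have no common zero with all coordinates transcendental over `K`: at such a
point, derivations of the residue field would turn the vanishing of all these members into the
vanishing of `P` to an order exceeding its degree in one variable after another. So, over an
algebraically closed field, every common zero lies on some hyperplane `X i = c`, and a product of
linear forms `X i - c` is in the ideal that these members generate. Multiplying by a member of `J`
raises the orders of interpolation from `Θ * t` to `(Θ + 1) * t` and the degrees by `e`; this gives
the interpolation of all multiples of the product, by induction on `Θ`. The linear factors are then
removed one at a time, by induction on the set of variables: modulo `X i - c` the problem is the
same in one variable less, where the orders only have to be kept at the single point `ζ j₀` with
`ζ j₀ i = c` and drop by `Θ` at the others. A power of the restriction of `P` to that hyperplane,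
times a power of `∏ l, (X l - ζ j₀ l) ^ d l`, plays the role of `P` there.
-/

namespace DysonLemma

section Derivations

open Algebra IntermediateField.algebraAdjoinAdjoin

theorem exists_derivation_extending_of_formallyEtale {R S T : Type*} [CommRing R] [CommRing S]
    [CommRing T] [Algebra R S] [Algebra S T] [Algebra R T] [IsScalarTower R S T]
    [FormallyEtale S T] (D : Derivation R S T) :
    ∃ δ : Derivation R T T, ∀ x, δ (algebraMap S T x) = D x := by
  have hbase := KaehlerDifferential.isBaseChange_of_formallyEtale R S T
  refine ⟨(hbase.lift D.liftKaehlerDifferential).compDer (KaehlerDifferential.D R T), fun x => ?_⟩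
  simpa using hbase.lift_eq D.liftKaehlerDifferential (KaehlerDifferential.D R S x)

theorem formallyEtale_adjoin_range_of_isTranscendenceBasis {ι K F : Type*} [Field K] [CharZero K]
    [Field F] [Algebra K F] {x : ι → F} (hx : IsTranscendenceBasis K x) :
    FormallyEtale (adjoin K (Set.range x)) F := by
  have := hx.isAlgebraic_field
  have : FormallyEtale (IntermediateField.adjoin K (Set.range x)) F :=
    FormallyEtale.of_isSeparable _ F
  have : FormallyEtale (adjoin K (Set.range x)) (IntermediateField.adjoin K (Set.range x)) :=
    .of_isLocalization (nonZeroDivisors _)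
  exact .comp _ (IntermediateField.adjoin K (Set.range x)) _

theorem exists_derivation_apply_ne_zero {K F : Type*} [Field K] [CharZero K] [Field F]
    [Algebra K F] {z : F} (hz : Transcendental K z) : ∃ δ : Derivation K F F, δ z ≠ 0 := by
  have hindep : AlgebraicIndepOn K id ({z} : Set F) :=
    (algebraicIndependent_unique_type_iff (x := fun x : ({z} : Set F) => (x : F))).2 (by simpa)
  obtain ⟨B, hzB, hB⟩ := exists_isTranscendenceBasis_superset hindep
  let i : B := ⟨z, hzB rfl⟩
  let x : B → F := Subtype.val
  have := formallyEtale_adjoin_range_of_isTranscendenceBasis hB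
  let S := adjoin K (Set.range x)
  let e : MvPolynomial B K ≃ₐ[K] S := hB.1.aevalEquiv
  let D : Derivation K S F := Derivation.mk'
    ((Algebra.linearMap S F).restrictScalars K ∘ₗ e.toLinearMap ∘ₗ
      (MvPolynomial.pderiv i).toLinearMap ∘ₗ e.symm.toLinearMap)
    (by intro a b; simp [Derivation.leibniz, Algebra.smul_def])
  obtain ⟨δ, hδ⟩ := exists_derivation_extending_of_formallyEtale D
  have hDz : D (e (MvPolynomial.X i)) = 1 := by simp [D]
  have hez : algebraMap S F (e (MvPolynomial.X i)) = z := by simp [e, i, S]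
  exact ⟨δ, by rw [← hez, hδ, hDz]; exact one_ne_zero⟩

theorem derivation_aeval {σ R A M : Type*} [Fintype σ] [CommRing R] [CommRing A] [Algebra R A]
    [AddCommGroup M] [Module A M] [Module R M] [IsScalarTower R A M] (D : Derivation R A M)
    (p : σ → A) (f : MvPolynomial σ R) :
    D (MvPolynomial.aeval p f) = ∑ i, MvPolynomial.aeval p (MvPolynomial.pderiv i f) • D (p i) := by
  classical
  induction f using MvPolynomial.induction_on with
  | C a => simp
  | add f g hf hg => simp [hf, hg, add_smul, Finset.sum_add_distrib]
  | mul_X f i hf =>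
    simp [hf, add_smul, Finset.sum_add_distrib, Finset.smul_sum, smul_smul, Pi.single_apply,
      apply_ite, ite_smul]

end Derivations

section DegreeBox

open MvPolynomial

variable {σ R : Type*} [CommRing R] {D E : σ → ℕ} {f g : MvPolynomial σ R}

variable (R) in
/-- The polynomials of degree at most `D i` in each variable `X i`. -/
noncomputable def degreeBox (D : σ → ℕ) : Submodule R (MvPolynomial σ R) :=
  restrictSupport R {k | ⇑k ≤ D}

theorem mem_degreeBox : f ∈ degreeBox R D ↔ ∀ k, coeff k f ≠ 0 → ⇑k ≤ D := by
  simp [degreeBox, mem_restrictSupport_iff, Set.subset_def]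

theorem mem_degreeBox_iff_degreeOf_le : f ∈ degreeBox R D ↔ ∀ i, degreeOf i f ≤ D i := by
  simp only [mem_degreeBox, degreeOf_le_iff, mem_support_iff, Pi.le_def]
  exact ⟨fun h i k hk => h k hk i, fun h k hk i => h i k hk⟩

theorem monomial_mem_degreeBox {k : σ →₀ ℕ} (hk : ⇑k ≤ D) (r : R) :
    monomial k r ∈ degreeBox R D :=
  (monomial_mem_restrictSupport R).2 (.inl hk)

theorem degreeBox_mono (h : D ≤ E) : degreeBox R D ≤ degreeBox R E :=
  restrictSupport_mono R fun _ hk => le_trans hk h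

theorem restrictSupport_le {s : Set (σ →₀ ℕ)} {V : Submodule R (MvPolynomial σ R)}
    (h : ∀ k ∈ s, monomial k 1 ∈ V) : restrictSupport R s ≤ V := by
  rw [restrictSupport_eq_span, Submodule.span_le]
  exact Set.image_subset_iff.2 h

theorem mul_mem_degreeBox (hf : f ∈ degreeBox R D) (hg : g ∈ degreeBox R E) :
    f * g ∈ degreeBox R (D + E) := by
  rw [mem_degreeBox_iff_degreeOf_le] at *
  exact fun i => (degreeOf_mul_le i f g).trans (add_le_add (hf i) (hg i))

theorem C_mem_degreeBox (r : R) : C r ∈ degreeBox R D :=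
  monomial_mem_degreeBox (zero_le : (0 : σ → ℕ) ≤ D) r

theorem aeval_X_mem_degreeBox [DecidableEq σ] (i : σ) {q : Polynomial R} {e : ℕ}
    (hq : q.natDegree ≤ e) :
    Polynomial.aeval (X i) q ∈ degreeBox R (Pi.single i e) := by
  rw [Polynomial.aeval_eq_sum_range]
  refine Submodule.sum_mem _ fun k hk => Submodule.smul_mem _ _ ?_
  rw [X_pow_eq_monomial]
  refine monomial_mem_degreeBox ?_ _
  rw [Finsupp.single_eq_pi_single]
  exact Pi.single_mono i (by grind)

theorem X_add_C_mem_degreeBox [DecidableEq σ] (i : σ) (r : R) :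
    X i + C r ∈ degreeBox R (Pi.single i 1) := by
  have hdeg : (Polynomial.X + Polynomial.C r).natDegree ≤ 1 := by compute_degree
  simpa [algebraMap_eq] using aeval_X_mem_degreeBox i hdeg

theorem X_sub_C_mem_degreeBox [DecidableEq σ] (i : σ) (r : R) :
    X i - C r ∈ degreeBox R (Pi.single i 1) := by
  simpa [sub_eq_add_neg] using X_add_C_mem_degreeBox i (-r)

theorem prod_mem_degreeBox {ι : Type*} {s : Finset ι} {F : ι → MvPolynomial σ R} {D : ι → σ → ℕ}
    (hF : ∀ j ∈ s, F j ∈ degreeBox R (D j)) : ∏ j ∈ s, F j ∈ degreeBox R (∑ j ∈ s, D j) := by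
  classical
  induction s using Finset.induction_on with
  | empty => simpa using C_mem_degreeBox (D := 0) (1 : R)
  | insert j s hj ih =>
    rw [Finset.prod_insert hj, Finset.sum_insert hj]
    exact mul_mem_degreeBox (hF j (by simp)) (ih fun l hl => hF l (by simp [hl]))

theorem pow_mem_degreeBox (hf : f ∈ degreeBox R D) (n : ℕ) : f ^ n ∈ degreeBox R (n • D) := by
  simpa using prod_mem_degreeBox (s := Finset.range n) fun _ _ => hf

theorem bind₁_mem_degreeBox [DecidableEq σ] {p : σ → MvPolynomial σ R}
    (hp : ∀ i, p i ∈ degreeBox R (Pi.single i 1)) (hf : f ∈ degreeBox R D) :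
    bind₁ p f ∈ degreeBox R D := by
  refine restrictSupport_le (V := (degreeBox R D).comap (bind₁ p).toLinearMap) (fun k hk => ?_) hf
  suffices bind₁ p (monomial k (1 : R)) ∈ degreeBox R D from this
  rw [bind₁_monomial, C_1, one_mul]
  refine degreeBox_mono ?_ (prod_mem_degreeBox fun i _ => pow_mem_degreeBox (hp i) (k i))
  intro j
  suffices ∑ i ∈ k.support, k i • Pi.single (M := fun _ => ℕ) i 1 j ≤ D j by simpa using this
  simp only [Pi.single_apply, smul_eq_mul, mul_ite, mul_one, mul_zero, Finset.sum_ite_eq]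
  split_ifs
  exacts [hk j, Nat.zero_le _]

theorem pderiv_mem_degreeBox (i : σ) (hf : f ∈ degreeBox R D) :
    pderiv i f ∈ degreeBox R D := by
  refine restrictSupport_le (V := (degreeBox R D).comap (pderiv i).toLinearMap) (fun k hk => ?_) hf
  suffices pderiv i (monomial k (1 : R)) ∈ degreeBox R D from this
  rw [pderiv_monomial]
  exact monomial_mem_degreeBox (le_trans (Finsupp.coe_le_coe.2 tsub_le_self) hk) _

theorem divX_mul_monomial_mem_degreeBox [DecidableEq σ] {i : σ} {a : Polynomial R} {m : ℕ}
    (ha : a.natDegree ≤ m + 2) {k : σ →₀ ℕ} (hk : ⇑k ≤ D) (hki : k i < D i) :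
    Polynomial.aeval (X i) a.divX * monomial k 1 ∈ degreeBox R (D + Pi.single i m) := by
  have hdivX : a.divX.natDegree ≤ m + 1 := by
    rw [Polynomial.natDegree_divX_eq_natDegree_tsub_one]
    omega
  refine degreeBox_mono ?_ (mul_mem_degreeBox (aeval_X_mem_degreeBox i hdivX)
    (monomial_mem_degreeBox (le_refl ⇑k) 1))
  intro j
  have := hk j
  obtain rfl | hj := eq_or_ne j i
  · simp only [Pi.add_apply, Pi.single_eq_same]; omega
  · simpa [hj] using this

-- On a monomial `X ^ k` the terms of degree `D i + m + 1` in `X i` have coefficient `k i - D i`,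
-- which vanishes exactly when they would leave the box.
theorem aeval_mul_pderiv_sub_mem_degreeBox [DecidableEq σ] (i : σ) {a : Polynomial R} {m : ℕ}
    (ha : a.natDegree ≤ m + 2) (hf : f ∈ degreeBox R D) :
    Polynomial.aeval (X i) a * pderiv i f - D i • (Polynomial.aeval (X i) a.divX * f) ∈
      degreeBox R (D + Pi.single i m) := by
  let L : MvPolynomial σ R →ₗ[R] MvPolynomial σ R :=
    LinearMap.mulLeft R (Polynomial.aeval (X i) a) ∘ₗ (pderiv i).toLinearMap -
      D i • LinearMap.mulLeft R (Polynomial.aeval (X i) a.divX)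
  refine restrictSupport_le (V := (degreeBox R (D + Pi.single i m)).comap L) (fun k hk => ?_) hf
  have hL : L (monomial k 1) = (k i - D i : ℤ) • (Polynomial.aeval (X i) a.divX * monomial k 1) +
      a.coeff 0 • pderiv i (monomial k 1) := by
    have ha' : Polynomial.aeval (X i) a =
        Polynomial.aeval (X i) a.divX * X i + C (a.coeff 0) := by
      conv_lhs => rw [← a.divX_mul_X_add]
      simp [algebraMap_eq]
    have hX : X i * pderiv i (monomial k (1 : R)) = k i • monomial k 1 := X_mul_pderiv_monomial
    have : L (monomial k 1) = Polynomial.aeval (X i) a * pderiv i (monomial k 1) -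
        D i • (Polynomial.aeval (X i) a.divX * monomial k 1) := rfl
    rw [this, ha', add_mul, mul_assoc, hX, mul_smul_comm, C_mul', sub_smul, natCast_zsmul,
      natCast_zsmul]
    abel
  rw [Submodule.mem_comap, hL]
  refine add_mem ?_ (Submodule.smul_mem _ _ (degreeBox_mono le_self_add
    (pderiv_mem_degreeBox i (monomial_mem_degreeBox hk 1))))
  obtain hki | hki := (hk i).lt_or_eq
  · exact zsmul_mem (divX_mul_monomial_mem_degreeBox ha hk hki) _
  · simp [hki]

/-- Exponents bounded by `D`, as a product of intervals. -/
noncomputable def boxExponentsEquiv [Fintype σ] [DecidableEq σ] (D : σ → ℕ) :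
    {k : σ →₀ ℕ | ⇑k ≤ D} ≃ Fintype.piFinset fun i => Finset.range (D i + 1) :=
  Finsupp.equivFunOnFinite.subtypeEquiv fun k => by simp [Pi.le_def]

instance [Finite σ] : Module.Finite R (degreeBox R D) := by
  classical
  cases nonempty_fintype σ
  have := Finite.of_equiv _ (boxExponentsEquiv D).symm
  exact .of_basis (basisRestrictSupport R _)

theorem finrank_degreeBox [Fintype σ] [StrongRankCondition R] (D : σ → ℕ) :
    Module.finrank R (degreeBox R D) = ∏ i, (D i + 1) := by
  classical
  rw [degreeBox, Module.finrank_eq_nat_card_basis (basisRestrictSupport R _),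
    Nat.card_congr (boxExponentsEquiv D), Nat.card_eq_fintype_card, Fintype.card_coe,
    Fintype.card_piFinset]
  simp

end DegreeBox

section IndexIdeal

open MvPolynomial

variable {σ R : Type*} [CommRing R] {d : σ → ℕ} {z : σ → R} {a b : ℚ} {f g : MvPolynomial σ R}

/-- The substitution `X i ↦ X i + z i`, which turns Taylor coefficients at `z` into
coefficients. -/
noncomputable def translate (z : σ → R) : MvPolynomial σ R ≃ₐ[R] MvPolynomial σ R :=
  AlgEquiv.ofAlgHom (bind₁ fun i => X i + C (z i)) (bind₁ fun i => X i - C (z i))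
    (by ext; simp) (by ext; simp)

theorem translate_eq_bind₁ : translate z f = bind₁ (fun i => X i + C (z i)) f := rfl

@[simp]
theorem translate_X (i : σ) : translate z (X i) = X i + C (z i) := by
  simp [translate_eq_bind₁]

@[simp]
theorem translate_C (r : R) : translate z (C r) = C r := by
  simp [translate_eq_bind₁]

theorem translate_mem_degreeBox {D : σ → ℕ} (hf : f ∈ degreeBox R D) :
    translate z f ∈ degreeBox R D := by
  classical
  exact bind₁_mem_degreeBox (fun i => X_add_C_mem_degreeBox i (z i)) hf

theorem pderiv_translate (i : σ) : pderiv i (translate z f) = translate z (pderiv i f) := by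
  classical
  induction f using MvPolynomial.induction_on with
  | C r => simp
  | add f g hf hg => simp [hf, hg]
  | mul_X f j hf => simp [hf, Pi.single_apply, apply_ite]

/-- The weight `Σ i, k i / d i` of an exponent `k`. It takes values in `ℚ` so that thresholds have
a common denominator. -/
noncomputable def weight (d : σ → ℕ) : (σ →₀ ℕ) →+ ℚ :=
  Finsupp.weight fun i => (d i : ℚ)⁻¹

theorem weight_eq_sum [Fintype σ] (d : σ → ℕ) (k : σ →₀ ℕ) :
    weight d k = ∑ i, (k i : ℚ) / d i := by
  simp [weight, Finsupp.weight_apply, Finsupp.sum_fintype, div_eq_mul_inv]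

theorem weight_single (i : σ) (n : ℕ) : weight d (Finsupp.single i n) = n / d i := by
  simp [weight, Finsupp.weight_single, div_eq_mul_inv]

theorem weight_erase (i : σ) (k : σ →₀ ℕ) : weight d (k.erase i) = weight d k - k i / d i := by
  conv_rhs => rw [← Finsupp.single_add_erase i k, map_add, weight_single]
  simp

theorem weight_nonneg (k : σ →₀ ℕ) : 0 ≤ weight d k := by
  rw [weight, Finsupp.weight_apply]
  exact Finset.sum_nonneg fun i _ => by positivity

theorem weight_mono : Monotone (weight d) := fun k l hkl => by
  obtain ⟨m, rfl⟩ := exists_add_of_le hkl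
  simpa using weight_nonneg m

/-- The polynomials of index at least `c` at the point `z` with respect to `d`. -/
noncomputable def indexIdeal (d : σ → ℕ) (z : σ → R) (c : ℚ) : Ideal (MvPolynomial σ R) :=
  (restrictSupportIdeal R {k | c ≤ weight d k}
    fun _ _ hkl hk => le_trans hk (weight_mono hkl)).comap (translate z)

theorem mem_indexIdeal_iff_translate_mem :
    f ∈ indexIdeal d z a ↔ translate z f ∈ restrictSupport R {k | a ≤ weight d k} :=
  Iff.rfl

theorem mem_indexIdeal :
    f ∈ indexIdeal d z a ↔ ∀ k, coeff k (translate z f) ≠ 0 → a ≤ weight d k := by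
  simp [mem_indexIdeal_iff_translate_mem, mem_restrictSupport_iff, Set.subset_def]

theorem indexIdeal_anti (hab : a ≤ b) : indexIdeal d z b ≤ indexIdeal d z a := fun _ hf =>
  mem_indexIdeal.2 fun k hk => hab.trans (mem_indexIdeal.1 hf k hk)

theorem indexIdeal_of_nonpos (ha : a ≤ 0) : indexIdeal d z a = ⊤ :=
  Ideal.eq_top_iff_one _ |>.2 <| mem_indexIdeal.2 fun k _ => ha.trans (weight_nonneg k)

theorem mul_mem_indexIdeal (hf : f ∈ indexIdeal d z a) (hg : g ∈ indexIdeal d z b) :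
    f * g ∈ indexIdeal d z (a + b) := by
  classical
  rw [mem_indexIdeal] at *
  intro k hk
  rw [map_mul, coeff_mul] at hk
  obtain ⟨⟨l, m⟩, hlm, hne⟩ := Finset.exists_ne_zero_of_sum_ne_zero hk
  rw [← (Finset.HasAntidiagonal.mem_antidiagonal.1 hlm : l + m = k), map_add]
  exact add_le_add (hf l (left_ne_zero_of_mul hne)) (hg m (right_ne_zero_of_mul hne))

theorem prod_mem_indexIdeal {ι : Type*} {s : Finset ι} {F : ι → MvPolynomial σ R} {c : ι → ℚ}
    (hF : ∀ j ∈ s, F j ∈ indexIdeal d z (c j)) : ∏ j ∈ s, F j ∈ indexIdeal d z (∑ j ∈ s, c j) := by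
  classical
  induction s using Finset.induction_on with
  | empty => simp [indexIdeal_of_nonpos]
  | insert j s hj ih =>
    rw [Finset.prod_insert hj, Finset.sum_insert hj]
    exact mul_mem_indexIdeal (hF j (by simp)) (ih fun l hl => hF l (by simp [hl]))

theorem pow_mem_indexIdeal (hf : f ∈ indexIdeal d z a) (n : ℕ) :
    f ^ n ∈ indexIdeal d z (n * a) := by
  simpa using prod_mem_indexIdeal (s := Finset.range n) fun _ _ => hf

theorem X_sub_C_pow_mem_indexIdeal (i : σ) (n : ℕ) :
    (X i - C (z i)) ^ n ∈ indexIdeal d z (n / d i) := by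
  classical
  refine mem_indexIdeal.2 fun k hk => ?_
  rw [map_pow, map_sub, translate_X, translate_C, add_sub_cancel_right, coeff_X_pow] at hk
  obtain rfl : Finsupp.single i n = k := by by_contra h; simp [h] at hk
  rw [weight_single]

theorem pderiv_mem_indexIdeal (i : σ) (hf : f ∈ indexIdeal d z a) :
    pderiv i f ∈ indexIdeal d z (a - 1 / d i) := by
  refine mem_indexIdeal.2 fun k hk => ?_
  rw [← pderiv_translate, coeff_pderiv] at hk
  have := mem_indexIdeal.1 hf _ (left_ne_zero_of_mul hk)
  rw [map_add, weight_single] at this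
  simpa using this

theorem X_sub_C_mul_pderiv_mem_indexIdeal (i : σ) (hf : f ∈ indexIdeal d z a) :
    (X i - C (z i)) * pderiv i f ∈ indexIdeal d z a := by
  simpa using mul_mem_indexIdeal (X_sub_C_pow_mem_indexIdeal i 1) (pderiv_mem_indexIdeal i hf)

theorem mem_indexIdeal_of_X_sub_C_self_pow_mul {i : σ} {n : ℕ}
    (hf : (X i - C (z i)) ^ n * f ∈ indexIdeal d z a) : f ∈ indexIdeal d z (a - n / d i) := by
  refine mem_indexIdeal.2 fun k hk => ?_
  have := mem_indexIdeal.1 hf (Finsupp.single i n + k)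
  simp only [map_mul, map_pow, map_sub, translate_X, translate_C, add_sub_cancel_right,
    X_pow_eq_monomial, coeff_monomial_mul, one_mul, map_add, weight_single] at this
  linarith [this hk]

theorem mem_indexIdeal_of_X_sub_C_mul [IsDomain R] {i : σ} {c : R} (hc : z i ≠ c)
    (hf : (X i - C c) * f ∈ indexIdeal d z a) : f ∈ indexIdeal d z a := by
  classical
  refine mem_indexIdeal.2 fun k hk => ?_
  have htranslate : translate z ((X i - C c) * f) =
      X i * translate z f + C (z i - c) * translate z f := by
    simp only [map_mul, map_sub, translate_X, translate_C]
    ring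
  induction k using WellFoundedLT.induction with
  | ind k ih =>
    by_cases h : coeff k (translate z ((X i - C c) * f)) = 0
    · rw [htranslate, coeff_add, coeff_C_mul, coeff_X_mul'] at h
      split_ifs at h with hik
      · have hlt : k - Finsupp.single i 1 < k :=
          lt_of_le_of_ne tsub_le_self fun h => by
            have := DFunLike.congr_fun h i
            simp only [Finsupp.coe_tsub, Pi.sub_apply, Finsupp.single_eq_same,
              Finsupp.mem_support_iff, ne_eq] at this hik
            omega
        refine (ih _ hlt fun h0 => ?_).trans (weight_mono hlt.le)
        simp [h0, hk, sub_ne_zero.2 hc] at h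
      · simp [hk, sub_ne_zero.2 hc] at h
    · exact mem_indexIdeal.1 hf k h

theorem mem_indexIdeal_of_X_sub_C_pow_mul [IsDomain R] {i : σ} {c : R} (hc : z i ≠ c) (n : ℕ)
    (hf : (X i - C c) ^ n * f ∈ indexIdeal d z a) : f ∈ indexIdeal d z a := by
  induction n with
  | zero => simpa using hf
  | succ n ih =>
    rw [pow_succ', mul_assoc] at hf
    exact ih (mem_indexIdeal_of_X_sub_C_mul hc hf)

end IndexIdeal

section Specialization

open MvPolynomial

variable {σ R : Type*} [DecidableEq σ] [CommRing R] {d : σ → ℕ} {z : σ → R} {a : ℚ} {i : σ} {c : R}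
  {f : MvPolynomial σ R}

/-- The substitution `X i ↦ c`, as an endomorphism of the same polynomial ring. -/
noncomputable def specialize (i : σ) (c : R) : MvPolynomial σ R →ₐ[R] MvPolynomial σ R :=
  bind₁ (Function.update X i (C c))

@[simp]
theorem specialize_X_self : specialize i c (X i) = C c := by
  simp [specialize]

@[simp]
theorem specialize_X_of_ne {j : σ} (h : j ≠ i) : specialize i c (X j) = X j := by
  simp [specialize, h]

theorem specialize_specialize : specialize i c (specialize i c f) = specialize i c f := by
  have : (specialize i c).comp (specialize i c) = specialize i c := by
    ext j : 1
    obtain rfl | hj := eq_or_ne j i <;> simp [algHom_C, *]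
  exact DFunLike.congr_fun this f

theorem specialize_monomial (k : σ →₀ ℕ) :
    specialize i c (monomial k 1) = monomial (k.erase i) (c ^ k i) := by
  have herase : specialize i c (monomial (k.erase i) 1) = monomial (k.erase i) 1 := by
    rw [monomial_eq, C_1, one_mul, map_finsuppProd]
    refine Finsupp.prod_congr fun j hj => ?_
    rw [map_pow, specialize_X_of_ne (by grind [Finsupp.support_erase])]
  conv_lhs =>
    rw [← Finsupp.single_add_erase i k, ← one_mul (1 : R), ← monomial_mul, map_mul, herase]
  rw [← X_pow_eq_monomial, map_pow, specialize_X_self, ← C_pow, C_mul_monomial, mul_one]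

theorem specialize_mem_restrictSupport {s t : Set (σ →₀ ℕ)}
    (h : ∀ k ∈ s, c ^ k i ≠ 0 → k.erase i ∈ t) (hf : f ∈ restrictSupport R s) :
    specialize i c f ∈ restrictSupport R t := by
  refine restrictSupport_le (V := (restrictSupport R t).comap (specialize i c).toLinearMap)
    (fun k hk => ?_) hf
  suffices specialize i c (monomial k (1 : R)) ∈ restrictSupport R t from this
  rw [specialize_monomial, monomial_mem_restrictSupport]
  exact or_iff_not_imp_right.2 (h k hk)

theorem specialize_mem_degreeBox {D : σ → ℕ} (hf : f ∈ degreeBox R D) :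
    specialize i c f ∈ degreeBox R (Function.update D i 0) := by
  refine specialize_mem_restrictSupport (fun k hk _ j => ?_) hf
  obtain rfl | hj := eq_or_ne j i
  · simp
  · simpa [hj] using hk j

theorem translate_specialize :
    translate z (specialize i c f) = specialize i (c - z i) (translate z f) := by
  suffices (translate z).toAlgHom.comp (specialize i c) =
    (specialize i (c - z i)).comp (translate z).toAlgHom from DFunLike.congr_fun this f
  ext j : 1
  obtain rfl | hj := eq_or_ne j i
  · simp [algebraMap_eq]
  · simp [hj]

theorem specialize_self_mem_indexIdeal (hf : f ∈ indexIdeal d z a) :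
    specialize i (z i) f ∈ indexIdeal d z a := by
  rw [mem_indexIdeal_iff_translate_mem] at hf ⊢
  rw [translate_specialize, sub_self]
  refine specialize_mem_restrictSupport (fun k hk hki => ?_) hf
  have : k i = 0 := by by_contra h; simp [h] at hki
  simpa [weight_erase, this] using hk

theorem specialize_mem_indexIdeal {D : σ → ℕ} (hfD : f ∈ degreeBox R D)
    (hf : f ∈ indexIdeal d z a) : specialize i c f ∈ indexIdeal d z (a - D i / d i) := by
  rw [mem_indexIdeal_iff_translate_mem] at hf ⊢
  rw [translate_specialize]
  have hsupport : translate z f ∈ restrictSupport R {k | ⇑k ≤ D ∧ a ≤ weight d k} := fun k hk =>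
    ⟨translate_mem_degreeBox hfD hk, hf hk⟩
  refine specialize_mem_restrictSupport (fun k hk _ => ?_) hsupport
  have hki : (k i : ℚ) / d i ≤ D i / d i := by gcongr; exact hk.1 i
  simpa [weight_erase] using sub_le_sub hk.2 hki

theorem X_sub_C_dvd_iff_specialize_eq_zero : X i - C c ∣ f ↔ specialize i c f = 0 := by
  constructor
  · rintro ⟨g, rfl⟩
    simp
  · intro h
    let I := Ideal.span {(X i - C c : MvPolynomial σ R)}
    suffices (Ideal.Quotient.mkₐ R I).comp (specialize i c) = Ideal.Quotient.mkₐ R I by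
      have := DFunLike.congr_fun this f
      rw [AlgHom.comp_apply, h, map_zero] at this
      exact Ideal.mem_span_singleton.1 (Ideal.Quotient.eq_zero_iff_mem.1 this.symm)
    ext j : 1
    obtain rfl | hj := eq_or_ne j i
    · have : X j - C c ∈ I := Ideal.mem_span_singleton_self _
      simpa [sub_eq_zero, algebraMap_eq] using (Ideal.Quotient.eq.2 this).symm
    · simp [hj]

end Specialization

section Restriction

open MvPolynomial

variable {σ K : Type*} [Field K] {d D : σ → ℕ} {P : MvPolynomial σ K}

theorem X_sub_C_ne_zero (i : σ) (c : K) : (X i - C c : MvPolynomial σ K) ≠ 0 := by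
  classical
  exact fun h => by simpa using congr_arg (pderiv i) h

theorem degreeOf_X_sub_C (i : σ) (c : K) : degreeOf i (X i - C c : MvPolynomial σ K) = 1 := by
  rw [sub_eq_add_neg, ← map_neg, degreeOf_add_eq_of_degreeOf_lt] <;> simp

theorem exists_eq_X_sub_C_pow_mul [DecidableEq σ] (hP : P ≠ 0) (i : σ) (c : K) :
    ∃ k R, P = (X i - C c) ^ k * R ∧ specialize i c R ≠ 0 := by
  have hnotUnit : ¬ IsUnit (X i - C c : MvPolynomial σ K) := fun h => by
    simpa using h.map (specialize i c)
  obtain ⟨R, hPR, hR⟩ :=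
    (FiniteMultiplicity.of_not_isUnit hnotUnit hP).exists_eq_pow_mul_and_not_dvd
  exact ⟨_, R, hPR, mt X_sub_C_dvd_iff_specialize_eq_zero.2 hR⟩

theorem exists_restriction [DecidableEq σ] (hP : P ≠ 0) (hPD : P ∈ degreeBox K D) (i : σ) (c : K) :
    ∃ k ≤ D i, ∃ Q ∈ degreeBox K (Function.update D i 0), Q ≠ 0 ∧
      (∀ z a, z i = c → P ∈ indexIdeal d z a → Q ∈ indexIdeal d z (a - k / d i)) ∧
      ∀ z a, z i ≠ c → P ∈ indexIdeal d z a → Q ∈ indexIdeal d z (a - (D i - k) / d i) := by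
  obtain ⟨k, R, rfl, hR⟩ := exists_eq_X_sub_C_pow_mul hP i c
  have hpow := pow_ne_zero k (X_sub_C_ne_zero i c)
  have hR0 := right_ne_zero_of_mul hP
  simp only [mem_degreeBox_iff_degreeOf_le, degreeOf_mul_eq hpow hR0] at hPD
  have hdegree : k + degreeOf i R ≤ D i := by
    simpa [degreeOf_pow_eq _ _ _ (X_sub_C_ne_zero i c), degreeOf_X_sub_C] using hPD i
  have hRD : R ∈ degreeBox K (Function.update D i (D i - k)) := by
    refine mem_degreeBox_iff_degreeOf_le.2 fun j => ?_
    obtain rfl | hj := eq_or_ne j i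
    · simp only [Function.update_self]; omega
    · simpa [hj] using le_of_add_le_right (hPD j)
  have hQD : specialize i c R ∈ degreeBox K (Function.update D i 0) := by
    rw [← Function.update_idem (D i - k) 0 D]
    exact specialize_mem_degreeBox hRD
  refine ⟨k, by omega, specialize i c R, hQD, hR, ?_, ?_⟩
  · rintro z a rfl hmem
    exact specialize_self_mem_indexIdeal (mem_indexIdeal_of_X_sub_C_self_pow_mul hmem)
  · intro z a hz hmem
    have hRz := mem_indexIdeal_of_X_sub_C_pow_mul hz k hmem
    have := specialize_mem_indexIdeal (i := i) (c := c) hRD hRz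
    rwa [Function.update_self, Nat.cast_sub (by omega)] at this

theorem nonpos_of_mem_indexIdeal_of_mem_degreeBox_zero {z : σ → K} {a : ℚ} (hP : P ≠ 0)
    (hP0 : P ∈ degreeBox K 0) (hPa : P ∈ indexIdeal d z a) : a ≤ 0 := by
  obtain ⟨k, hk⟩ := ne_zero_iff.1 ((map_ne_zero_iff _ (translate z).injective).2 hP)
  have hk0 : k = 0 := le_antisymm (mem_degreeBox.1 (translate_mem_degreeBox hP0) k hk) zero_le
  simpa [hk0] using mem_indexIdeal.1 hPa k hk

theorem add_le_of_mem_indexIdeal [Fintype σ] {z z' : σ → K} (hz : ∀ i, z i ≠ z' i) {a b : ℚ}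
    (hP : P ≠ 0) (hPD : P ∈ degreeBox K D) (ha : P ∈ indexIdeal d z a)
    (hb : P ∈ indexIdeal d z' b) : a + b ≤ ∑ i, (D i : ℚ) / d i := by
  classical
  suffices ∀ s : Finset σ, (∀ i ∉ s, D i = 0) → a + b ≤ ∑ i, (D i : ℚ) / d i from
    this Finset.univ (by simp)
  intro s hs
  induction s using Finset.induction_on generalizing P D a b with
  | empty =>
    obtain rfl : D = 0 := funext fun i => hs i (by simp)
    simpa using add_nonpos (nonpos_of_mem_indexIdeal_of_mem_degreeBox_zero hP hPD ha)
      (nonpos_of_mem_indexIdeal_of_mem_degreeBox_zero hP hPD hb)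
  | insert i s _ ih =>
    obtain ⟨k, -, Q, hQD, hQ, hself, hother⟩ := exists_restriction (d := d) hP hPD i (z i)
    have hle := ih hQ hQD (hself z a rfl ha) (hother z' b (hz i).symm hb) fun j hj => by
      obtain rfl | hji := eq_or_ne j i
      · simp
      · simpa [hji] using hs j (by simp [hji, hj])
    have hsum : ∑ j, (D j : ℚ) / d j = D i / d i + ∑ j, (Function.update D i 0 j : ℚ) / d j := by
      rw [← Finset.add_sum_erase _ _ (Finset.mem_univ i),
        ← Finset.sum_erase (a := i) (f := fun j => (Function.update D i 0 j : ℚ) / d j) _ (by simp)]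
      refine congr_arg _ (Finset.sum_congr rfl fun j hj => ?_)
      rw [Function.update_of_ne (Finset.ne_of_mem_erase hj)]
    rw [sub_div] at hle
    linarith

end Restriction

section Admissible

open MvPolynomial

variable {σ ι K : Type*} [Field K] {d : σ → ℕ} {ζ : ι → σ → K}
  {s : Finset σ} {t : ι → ℚ}

theorem update_piecewise_zero [DecidableEq σ] (s : Finset σ) (D : σ → ℕ) (i : σ) :
    Function.update (s.piecewise D 0) i 0 = (s.erase i).piecewise D 0 := by
  ext j
  obtain rfl | hj := eq_or_ne j i
  · simp
  · by_cases hjs : j ∈ s <;> simp [hj, hjs]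

theorem prod_X_sub_C_pow_mem_degreeBox [DecidableEq σ] (s : Finset σ) (z : σ → K) (e : σ → ℕ) :
    ∏ i ∈ s, (X i - C (z i)) ^ e i ∈ degreeBox K (s.piecewise e 0) := by
  refine degreeBox_mono (fun j => ?_) (prod_mem_degreeBox fun i _ =>
    pow_mem_degreeBox (X_sub_C_mem_degreeBox i (z i)) (e i))
  by_cases hj : j ∈ s <;> simp [Pi.single_apply, hj]

theorem prod_X_sub_C_pow_mem_indexIdeal (hd : ∀ i, 0 < d i) (s : Finset σ) (z : σ → K) (b : ℕ) :
    ∏ i ∈ s, (X i - C (z i)) ^ (b * d i) ∈ indexIdeal d z (b * s.card) := by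
  have hfactor : ∀ i ∈ s, (X i - C (z i)) ^ (b * d i) ∈ indexIdeal d z b := fun i _ => by
    have hdi : (d i : ℚ) ≠ 0 := mod_cast (hd i).ne'
    simpa [hdi] using X_sub_C_pow_mem_indexIdeal (d := d) (z := z) i (b * d i)
  simpa [mul_comm] using prod_mem_indexIdeal hfactor

/-- A system of rational thresholds `t` at the points `ζ` is admissible over `s` if, after scaling
by some `N > 0`, it is attained by a nonzero polynomial in the variables of `s` of degree at most
`N d`. -/
def IsAdmissible [DecidableEq σ] (d : σ → ℕ) (ζ : ι → σ → K) (s : Finset σ) (t : ι → ℚ) : Prop :=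
  ∃ N : ℕ, 0 < N ∧ ∃ P ∈ degreeBox K (s.piecewise (N • d) 0), P ≠ 0 ∧
    ∀ j, P ∈ indexIdeal d (ζ j) (N * t j)

/-- The thresholds `t`, lowered by `r` at every index other than `j₀`. -/
def lowerAway [DecidableEq ι] (t : ι → ℚ) (r : ℚ) (j₀ : ι) : ι → ℚ :=
  Function.update (fun j => t j - r) j₀ (t j₀)

theorem lowerAway_self [DecidableEq ι] (r : ℚ) (j₀ : ι) : lowerAway t r j₀ j₀ = t j₀ := by
  simp [lowerAway]

theorem lowerAway_of_ne [DecidableEq ι] {j j₀ : ι} (h : j ≠ j₀) (r : ℚ) :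
    lowerAway t r j₀ j = t j - r := by
  simp [lowerAway, h]

theorem sub_le_lowerAway [DecidableEq ι] {r : ℚ} (hr : 0 ≤ r) (j₀ j : ι) :
    t j - r ≤ lowerAway t r j₀ j := by
  obtain rfl | hj := eq_or_ne j j₀ <;> simp [lowerAway, *]

theorem exists_pos_natCast_mul_eq_natCast_mul {x y : ℚ} (hx : 0 ≤ x) (hy : 0 < y) :
    ∃ a b : ℕ, 0 < a ∧ a * x = b * y := by
  refine ⟨(x / y).den, (x / y).num.toNat, Rat.den_pos _, ?_⟩
  have hnum : (((x / y).num.toNat : ℤ) : ℚ) = (x / y).num := by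
    rw [Int.toNat_of_nonneg (Rat.num_nonneg.2 (by positivity))]
  rw [← Int.cast_natCast (x / y).num.toNat, hnum, ← Rat.mul_den_eq_num]
  field_simp

namespace IsAdmissible

variable [DecidableEq σ]

theorem add_le_card [Finite σ] (hd : ∀ i, 0 < d i) (h : IsAdmissible d ζ s t) {j j' : ι}
    (hj : ∀ i, ζ j i ≠ ζ j' i) : t j + t j' ≤ s.card := by
  cases nonempty_fintype σ
  obtain ⟨N, hN, P, hPD, hP, hPt⟩ := h
  have hterm : ∀ i, (s.piecewise (N • d) 0 i : ℚ) / d i = if i ∈ s then (N : ℚ) else 0 := by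
    intro i
    have := (hd i).ne'
    by_cases hi : i ∈ s
    · simp only [hi, Finset.piecewise_eq_of_mem, Pi.smul_apply, smul_eq_mul,
        Nat.cast_mul, ↓reduceIte]
      field_simp
    · simp [hi]
  have hle := add_le_of_mem_indexIdeal hj hP hPD (hPt j) (hPt j')
  rw [Finset.sum_congr rfl fun i _ => hterm i, Finset.sum_ite_mem, Finset.univ_inter,
    Finset.sum_const, nsmul_eq_mul, ← mul_add, mul_comm (s.card : ℚ)] at hle
  exact le_of_mul_le_mul_left hle (by positivity)

theorem of_pow_mul_prod (hd : ∀ i, 0 < d i) {Q : MvPolynomial σ K} (hQ : Q ≠ 0) {N a b : ℕ}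
    (hpos : 0 < a * N + b) (hQD : Q ∈ degreeBox K (s.piecewise (N • d) 0)) {j₀ : ι} {c : ι → ℚ}
    (hQc : ∀ j, Q ∈ indexIdeal d (ζ j) (c j))
    (hself : (a * N + b) * t j₀ ≤ a * c j₀ + b * s.card)
    (hother : ∀ j ≠ j₀, (a * N + b) * t j ≤ a * c j) : IsAdmissible d ζ s t := by
  refine ⟨a * N + b, hpos, Q ^ a * ∏ l ∈ s, (X l - C (ζ j₀ l)) ^ (b * d l), ?_,
    mul_ne_zero (pow_ne_zero _ hQ)
      (Finset.prod_ne_zero_iff.2 fun l _ => pow_ne_zero _ (X_sub_C_ne_zero _ _)), fun j => ?_⟩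
  · refine degreeBox_mono (fun l => le_of_eq ?_) (mul_mem_degreeBox (pow_mem_degreeBox hQD a)
      (prod_X_sub_C_pow_mem_degreeBox _ (ζ j₀) fun l => b * d l))
    by_cases hl : l ∈ s
    · simp [hl, add_mul, mul_assoc]
    · simp [hl]
  · have hpow := pow_mem_indexIdeal (hQc j) a
    obtain rfl | hj := eq_or_ne j j₀
    · refine indexIdeal_anti ?_
        (mul_mem_indexIdeal hpow (prod_X_sub_C_pow_mem_indexIdeal hd _ _ b))
      exact_mod_cast hself
    · refine indexIdeal_anti ?_ (Ideal.mul_mem_right _ _ hpow)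
      exact_mod_cast hother j hj

-- The restriction `Q` of `P` to `X i = ζ j₀ i` loses `k / d i` at `j₀`. The product in
-- `of_pow_mul_prod`, which vanishes to maximal order at `ζ j₀`, compensates for this.
theorem erase_lowerAway [Finite σ] [DecidableEq ι] [Finite ι] (hd : ∀ i, 0 < d i)
    (hsep : Pairwise fun j j' => ∀ i, ζ j i ≠ ζ j' i) (h : IsAdmissible d ζ s t) {i : σ}
    (hi : i ∈ s) (j₀ : ι) :
    (∀ j ≠ j₀, t j ≤ 1) ∨ IsAdmissible d ζ (s.erase i) (lowerAway t 1 j₀) := by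
  refine or_iff_not_imp_left.2 fun hlarge => ?_
  push Not at hlarge
  obtain ⟨j₁, hj₁, hmax⟩ := Set.exists_max_image {j | j ≠ j₀} t (Set.toFinite _)
    (hlarge.imp fun j hj => hj.1)
  have hlt : 1 < t j₁ := by
    obtain ⟨j, hj, hlt⟩ := hlarge
    exact hlt.trans_le (hmax j hj)
  have hpair := h.add_le_card hd (hsep hj₁)
  obtain ⟨N, hN, P, hPD, hP, hPt⟩ := h
  obtain ⟨k, -, Q, hQD, hQ, hself, hother⟩ := exists_restriction (d := d) hP hPD i (ζ j₀ i)
  obtain ⟨a, b, ha, hab⟩ := exists_pos_natCast_mul_eq_natCast_mul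
    (by positivity : 0 ≤ (k : ℚ) / d i) (sub_pos.2 hlt)
  rw [update_piecewise_zero] at hQD
  have hdi : (d i : ℚ) ≠ 0 := mod_cast (hd i).ne'
  let c j := N * t j - if j = j₀ then (k : ℚ) / d i else N - k / d i
  have hQc : ∀ j, Q ∈ indexIdeal d (ζ j) (c j) := fun j => by
    by_cases hj : j = j₀
    · simpa [c, hj] using hself _ _ rfl (hPt j₀)
    · simpa [c, hj, hi, sub_div, hdi] using hother _ _ (hsep hj i) (hPt j)
  refine of_pow_mul_prod hd hQ (a := a) (b := b) (by positivity) hQD (j₀ := j₀) hQc ?_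
    fun j hj => ?_
  · have hb : (b : ℚ) * (t j₁ - 1 + t j₀) ≤ b * (s.card - 1) := by
      gcongr
      linarith
    simp only [lowerAway_self, c, ↓reduceIte, Finset.card_erase_of_mem hi,
      Nat.cast_pred (Finset.card_pos.2 ⟨i, hi⟩)]
    linarith
  · have hb : (b : ℚ) * t j ≤ b * t j₁ := by
      gcongr
      exact hmax j hj
    simp only [lowerAway_of_ne hj, c, hj, ↓reduceIte]
    linarith

end IsAdmissible

end Admissible

section Interpolation

open MvPolynomial

variable {σ ι K : Type*} [Field K] {d D D₀ : σ → ℕ} {ζ : ι → σ → K} {c : ι → ℚ} {z : σ → K}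
  {f q : MvPolynomial σ K} {i : σ}

theorem mem_degreeBox_of_mul_mem {g : MvPolynomial σ K} (hg : g ≠ 0)
    (hgf : g * f ∈ degreeBox K D) : f ∈ degreeBox K D := by
  obtain rfl | hf := eq_or_ne f 0
  · exact zero_mem _
  rw [mem_degreeBox_iff_degreeOf_le] at *
  intro i
  have := hgf i
  rw [degreeOf_mul_eq hg hf] at this
  omega

/-- The tuples of polynomials that a single polynomial in the box `D` approximates to order `c j`
at each point `ζ j`. -/
def interpolable (d : σ → ℕ) (ζ : ι → σ → K) (c : ι → ℚ) (D : σ → ℕ) :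
    Submodule K (ι → MvPolynomial σ K) where
  carrier := {f | ∃ g ∈ degreeBox K D, ∀ j, g - f j ∈ indexIdeal d (ζ j) (c j)}
  add_mem' := by
    rintro f f' ⟨g, hg, hgf⟩ ⟨g', hg', hgf'⟩
    refine ⟨g + g', add_mem hg hg', fun j => ?_⟩
    simpa [add_sub_add_comm] using add_mem (hgf j) (hgf' j)
  zero_mem' := ⟨0, zero_mem _, by simp⟩
  smul_mem' := by
    rintro r f ⟨g, hg, hgf⟩
    refine ⟨r • g, Submodule.smul_mem _ _ hg, fun j => ?_⟩
    simpa [smul_sub] using Submodule.smul_of_tower_mem _ r (hgf j)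

theorem const_mem_interpolable (hf : f ∈ degreeBox K D) : (fun _ => f) ∈ interpolable d ζ c D :=
  ⟨f, hf, by simp⟩

theorem mem_interpolable_of_mem_indexIdeal {f : ι → MvPolynomial σ K}
    (hf : ∀ j, f j ∈ indexIdeal d (ζ j) (c j)) : f ∈ interpolable d ζ c D :=
  ⟨0, zero_mem _, by simpa using hf⟩

/-- Multiples by `q` of tuples from the box `D₀` lie in the box `D`, and they can be interpolated
to the orders `c` by polynomials of that box. -/
structure Interpolates (d : σ → ℕ) (ζ : ι → σ → K) (c : ι → ℚ) (q : MvPolynomial σ K)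
    (D₀ D : σ → ℕ) : Prop where
  mul_mem : ∀ f ∈ degreeBox K D₀, q * f ∈ degreeBox K D
  mem_interpolable : ∀ f : ι → MvPolynomial σ K, (∀ j, f j ∈ degreeBox K D₀) →
    (fun j => q * f j) ∈ interpolable d ζ c D

variable [DecidableEq σ]

theorem exists_sub_X_sub_C_mul_mem_indexIdeal {c : K} (hz : z i ≠ c) {a : ℚ} {p : ℕ}
    (hp : p ≤ D i) (hf : f ∈ degreeBox K (Function.update D i 0))
    (hfa : f ∈ indexIdeal d z (a - p / d i)) :
    ∃ r ∈ degreeBox K D, f - (X i - C c) * r ∈ indexIdeal d z a := by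
  let w : Polynomial K :=
    Polynomial.C ((c - z i) ^ p)⁻¹ * (Polynomial.X - Polynomial.C (z i)) ^ p
  have haeval : Polynomial.aeval (X i) w = C ((c - z i) ^ p)⁻¹ * (X i - C (z i)) ^ p := by
    simp [w, algebraMap_eq]
  have hroot : (1 - w).IsRoot c := by
    have : c - z i ≠ 0 := sub_ne_zero.2 hz.symm
    simp [w, this]
  obtain ⟨R, hR⟩ := Polynomial.dvd_iff_isRoot.2 hroot
  have hsplit : (X i - C c) * (Polynomial.aeval (X i) R * f) =
      Polynomial.aeval (X i) (1 - w) * f := by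
    rw [hR, map_mul]
    simp [algebraMap_eq, mul_assoc]
  refine ⟨Polynomial.aeval (X i) R * f, mem_degreeBox_of_mul_mem (X_sub_C_ne_zero i c) ?_, ?_⟩
  · have hdeg : (1 - w).natDegree ≤ p := by simp only [w]; compute_degree
    rw [hsplit]
    refine degreeBox_mono (fun j => ?_) (mul_mem_degreeBox (aeval_X_mem_degreeBox i hdeg) hf)
    obtain rfl | hj := eq_or_ne j i <;> simp [*]
  · have := mul_mem_indexIdeal (X_sub_C_pow_mem_indexIdeal (d := d) i p) hfa
    rw [hsplit, map_sub, map_one, sub_mul, one_mul, sub_sub_cancel, haeval, mul_assoc]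
    refine Ideal.mul_mem_left _ _ ?_
    rwa [add_sub_cancel] at this

theorem exists_X_pow_mul_sub_mem_indexIdeal {a : ℚ} {p : ℕ} (hp : p ≤ D i)
    (hf : f ∈ degreeBox K (Function.update D i 0)) (hfa : f ∈ indexIdeal d z (a - p / d i)) :
    ∃ r ∈ degreeBox K D, X i ^ (D i + 1) * f - r ∈ indexIdeal d z a := by
  let w : Polynomial K := (Polynomial.X - Polynomial.C (z i)) ^ p
  have hw : w.Monic := (Polynomial.monic_X_sub_C _).pow _
  have haeval : Polynomial.aeval (X i) w = (X i - C (z i)) ^ p := by simp [w, algebraMap_eq]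
  have hdiv := congrArg (Polynomial.aeval (X i : MvPolynomial σ K))
    (Polynomial.modByMonic_add_div (Polynomial.X ^ (D i + 1)) w)
  rw [map_add, map_mul, haeval, map_pow, Polynomial.aeval_X] at hdiv
  refine ⟨Polynomial.aeval (X i) (Polynomial.X ^ (D i + 1) %ₘ w) * f, ?_, ?_⟩
  · have hdeg : (Polynomial.X ^ (D i + 1) %ₘ w).natDegree ≤ D i :=
      (Polynomial.natDegree_modByMonic_le _ hw).trans (by simpa [w] using hp)
    refine degreeBox_mono (fun j => ?_) (mul_mem_degreeBox (aeval_X_mem_degreeBox i hdeg) hf)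
    obtain rfl | hj := eq_or_ne j i <;> simp [*]
  · have := mul_mem_indexIdeal (X_sub_C_pow_mem_indexIdeal (d := d) i p) hfa
    rw [← hdiv, ← sub_mul, add_sub_cancel_left, mul_right_comm]
    refine Ideal.mul_mem_right _ _ ?_
    rwa [add_sub_cancel] at this

theorem exists_sub_X_pow_mul_mem_degreeBox (hf : f ∈ degreeBox K (D + Pi.single i 1)) :
    ∃ g ∈ degreeBox K (Function.update D i 0), f - X i ^ (D i + 1) * g ∈ degreeBox K D := by
  let V : Submodule K (MvPolynomial σ K) := degreeBox K D ⊔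
    (degreeBox K (Function.update D i 0)).map (LinearMap.mulLeft K (X i ^ (D i + 1)))
  suffices f ∈ V by
    obtain ⟨r, hr, _, ⟨g, hg, rfl⟩, rfl⟩ := Submodule.mem_sup.1 this
    exact ⟨g, hg, by simpa using hr⟩
  refine restrictSupport_le (V := V) (fun k hk => ?_) hf
  by_cases hki : k i = D i + 1
  · refine Submodule.mem_sup_right ⟨monomial (k.erase i) 1, monomial_mem_degreeBox ?_ 1, ?_⟩
    · intro j
      have := hk j
      obtain rfl | hj := eq_or_ne j i <;> simp_all
    · rw [LinearMap.mulLeft_apply, X_pow_eq_monomial, monomial_mul, one_mul, ← hki,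
        Finsupp.single_add_erase]
  · refine Submodule.mem_sup_left (monomial_mem_degreeBox (fun j => ?_) 1)
    have := hk j
    by_cases hj : j = i
    · subst hj
      simp only [Pi.add_apply, Pi.single_eq_same] at this
      exact Nat.lt_succ_iff.1 (this.lt_of_ne hki)
    · simpa [hj] using this

namespace Interpolates

variable [DecidableEq ι] [Nonempty ι] {p : ℕ}

theorem of_X_sub_C_mul (hsep : Pairwise fun j j' => ζ j i ≠ ζ j' i) (hp : p ≤ D₀ i)
    (hlower : ∀ j₀, Interpolates d ζ (lowerAway c (p / d i) j₀) 1
      (Function.update D₀ i 0) (Function.update D₀ i 0)) {c₀ : K}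
    (h : Interpolates d ζ c ((X i - C c₀) * q) D₀ D) : Interpolates d ζ c q D₀ D := by
  have hmul : ∀ f ∈ degreeBox K D₀, q * f ∈ degreeBox K D := fun f hf =>
    mem_degreeBox_of_mul_mem (X_sub_C_ne_zero i c₀) (mul_assoc _ q f ▸ h.mul_mem f hf)
  have hupdate : Function.update D₀ i 0 ≤ D₀ := update_le_self_iff.2 (Nat.zero_le _)
  refine ⟨hmul, fun f hf => ?_⟩
  obtain ⟨j₀, hj₀⟩ : ∃ j₀, ∀ j ≠ j₀, ζ j i ≠ c₀ := by
    by_cases hc₀ : ∃ j₀, ζ j₀ i = c₀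
    · obtain ⟨j₀, rfl⟩ := hc₀
      exact ⟨j₀, fun j hj => hsep hj⟩
    · exact ⟨Classical.arbitrary ι, fun j _ hj => hc₀ ⟨j, hj⟩⟩
  have hspecialize : ∀ j, specialize i c₀ (f j) ∈ degreeBox K (Function.update D₀ i 0) :=
    fun j => specialize_mem_degreeBox (hf j)
  obtain ⟨g, hg, hgf⟩ := (hlower j₀).mem_interpolable _ hspecialize
  have hfar : ∀ j, ∃ r ∈ degreeBox K D₀,
      specialize i c₀ (f j) - g - (X i - C c₀) * r ∈ indexIdeal d (ζ j) (c j) := by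
    intro j
    have hj := neg_mem (hgf j)
    simp only [neg_sub, one_mul] at hj
    obtain rfl | hne := eq_or_ne j j₀
    · exact ⟨0, zero_mem _, by simpa [lowerAway_self] using hj⟩
    · rw [lowerAway_of_ne hne] at hj
      exact exists_sub_X_sub_C_mul_mem_indexIdeal (hj₀ j hne) hp (sub_mem (hspecialize j) hg) hj
  choose r hr hrf using hfar
  have hdvd : ∀ j, X i - C c₀ ∣ f j - specialize i c₀ (f j) := fun j => by
    rw [X_sub_C_dvd_iff_specialize_eq_zero, map_sub, specialize_specialize, sub_self]
  choose r' hr' using hdvd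
  have hr'D : ∀ j, r' j ∈ degreeBox K D₀ := fun j =>
    mem_degreeBox_of_mul_mem (X_sub_C_ne_zero i c₀)
      (hr' j ▸ sub_mem (hf j) (degreeBox_mono hupdate (hspecialize j)))
  convert add_mem (add_mem
    (const_mem_interpolable (hmul g (degreeBox_mono hupdate hg)))
    (h.mem_interpolable _ fun j => add_mem (hr j) (hr'D j)))
    (mem_interpolable_of_mem_indexIdeal fun j => Ideal.mul_mem_left _ q (hrf j)) using 1
  ext1 j
  simp only [Pi.add_apply]
  linear_combination q * hr' j

theorem add_single (hp : p ≤ D₀ i)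
    (hlower : ∀ j₀, Interpolates d ζ (lowerAway c (p / d i) j₀) 1
      (Function.update D₀ i 0) (Function.update D₀ i 0))
    (hD : D₀ + Pi.single i 1 ≤ D) (h : Interpolates d ζ c 1 D₀ D) :
    Interpolates d ζ c 1 (D₀ + Pi.single i 1) D := by
  refine ⟨fun f hf => by simpa using degreeBox_mono hD hf, fun f hf => ?_⟩
  choose top htop hlow using fun j => exists_sub_X_pow_mul_mem_degreeBox (hf j)
  obtain ⟨g, hg, hgtop⟩ := (hlower (Classical.arbitrary ι)).mem_interpolable _ htop
  have hfar : ∀ j, ∃ r ∈ degreeBox K D₀,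
      X i ^ (D₀ i + 1) * (top j - g) - r ∈ indexIdeal d (ζ j) (c j) := by
    intro j
    refine exists_X_pow_mul_sub_mem_indexIdeal hp (sub_mem (htop j) hg)
      (indexIdeal_anti ?_ (neg_sub g (top j) ▸ neg_mem (by simpa only [one_mul] using hgtop j)))
    exact sub_le_lowerAway (by positivity) _ j
  choose r hr hrtop using hfar
  have hgD : X i ^ (D₀ i + 1) * g ∈ degreeBox K D := by
    refine degreeBox_mono (le_trans (fun j => ?_) hD)
      (mul_mem_degreeBox (pow_mem_degreeBox (by simpa using X_add_C_mem_degreeBox i (0 : K)) _) hg)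
    obtain rfl | hj := eq_or_ne j i <;> simp [*]
  convert add_mem (add_mem (const_mem_interpolable hgD)
    (h.mem_interpolable _ fun j => add_mem (hlow j) (hr j)))
    (mem_interpolable_of_mem_indexIdeal hrtop) using 1
  ext1 j
  simp only [Pi.add_apply]
  ring

theorem of_mem_closure_mul {s : Set σ} {p : σ → ℕ} (hp : ∀ i ∈ s, p i ≤ D₀ i)
    (hsep : ∀ i ∈ s, Pairwise fun j j' => ζ j i ≠ ζ j' i)
    (hlower : ∀ i ∈ s, ∀ j₀, Interpolates d ζ (lowerAway c (p i / d i) j₀) 1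
      (Function.update D₀ i 0) (Function.update D₀ i 0)) {h : MvPolynomial σ K}
    (hh : h ∈ Submonoid.closure {f | ∃ i ∈ s, ∃ c₀, f = X i - C c₀})
    (hq : Interpolates d ζ c (h * q) D₀ D) : Interpolates d ζ c q D₀ D := by
  induction hh using Submonoid.closure_induction generalizing q with
  | mem f hf =>
    obtain ⟨i, hi, c₀, rfl⟩ := hf
    exact of_X_sub_C_mul (hsep i hi) (hp i hi) (hlower i hi) hq
  | one => rwa [one_mul] at hq
  | mul f g _ _ ihf ihg => exact ihg (ihf (by rwa [← mul_assoc]))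

theorem mono_left [Finite σ] {p : σ → ℕ} (hp : ∀ i, D₀ i < D i → p i ≤ D₀ i)
    (hlower : ∀ i, D₀ i < D i → ∀ D', D₀ ≤ D' → D' ≤ D → ∀ j₀, Interpolates d ζ
      (lowerAway c (p i / d i) j₀) 1 (Function.update D' i 0) (Function.update D' i 0))
    (h : Interpolates d ζ c 1 D₀ D) {D₁ : σ → ℕ} (h₀₁ : D₀ ≤ D₁) (h₁ : D₁ ≤ D) :
    Interpolates d ζ c 1 D₁ D := by
  induction D₁ using WellFoundedLT.induction with
  | ind D₁ ih =>
    obtain rfl | hne := h₀₁.eq_or_lt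
    · exact h
    obtain ⟨i, hi⟩ := (Pi.lt_def.1 hne).2
    have hsplit : D₁ - Pi.single i 1 + Pi.single i 1 = D₁ := tsub_add_cancel_of_le fun j => by
      obtain rfl | hj := eq_or_ne j i
      · simpa using Nat.one_le_of_lt hi
      · simp [hj]
    have h₀ : D₀ ≤ D₁ - Pi.single i 1 := fun j => by
      have := h₀₁ j
      obtain rfl | hj := eq_or_ne j i
      · simpa using Nat.le_sub_one_of_lt hi
      · simpa [hj] using this
    have hlt : D₁ - Pi.single i 1 < D₁ :=
      Pi.lt_def.2 ⟨tsub_le_self, i, by simpa using hi.bot_lt⟩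
    have hiD := hi.trans_le (h₁ i)
    rw [← hsplit]
    exact add_single ((hp i hiD).trans (h₀ i)) (hlower i hiD _ h₀ (tsub_le_self.trans h₁))
      (hsplit.trans_le h₁) (ih _ hlt h₀ (tsub_le_self.trans h₁))

end Interpolates

end Interpolation

section CoefficientwiseDerivation

open Polynomial

variable {K F : Type*} [Field K] [Field F] [Algebra K F]

/-- The derivation of `F[X]` which applies `δ` to the coefficients and kills `X`. -/
noncomputable def coeffDerivation (δ : Derivation K F F) : Derivation K F[X] F[X] :=
  PolynomialModule.equivPolynomialSelf.compDer δ.mapCoeffs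

@[simp]
theorem coeffDerivation_X (δ : Derivation K F F) : coeffDerivation δ X = 0 := by
  simp [coeffDerivation]

@[simp]
theorem coeffDerivation_C (δ : Derivation K F F) (x : F) :
    coeffDerivation δ (C x) = C (δ x) := by
  simp [coeffDerivation]

theorem X_sub_C_pow_succ_dvd_of_dvd_coeffDerivation [CharZero F] {δ : Derivation K F F} {z : F}
    (hδ : δ z ≠ 0) {g : F[X]} {k : ℕ} (hg : (X - C z) ^ (k + 1) ∣ g)
    (hδg : (X - C z) ^ (k + 1) ∣ coeffDerivation δ g) : (X - C z) ^ (k + 2) ∣ g := by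
  obtain ⟨h, rfl⟩ := hg
  have hne : (X - C z) ^ k ≠ 0 := pow_ne_zero _ (Polynomial.X_sub_C_ne_zero z)
  have hunit : IsUnit (C ((k + 1 : F) * δ z)) :=
    isUnit_C.2 (mul_ne_zero (mod_cast k.succ_ne_zero) hδ).isUnit
  have hder : coeffDerivation δ ((X - C z) ^ (k + 1) * h) =
      (X - C z) ^ (k + 1) * coeffDerivation δ h - (X - C z) ^ k * (C ((k + 1 : F) * δ z) * h) := by
    simp only [Derivation.leibniz, Derivation.leibniz_pow, smul_eq_mul, add_tsub_cancel_right,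
      map_sub, coeffDerivation_X, coeffDerivation_C, zero_sub, mul_neg, smul_neg, nsmul_eq_mul,
      Nat.cast_add, Nat.cast_one, map_mul, map_add, map_natCast, map_one]
    ring
  rw [hder, dvd_sub_right (dvd_mul_right _ _), pow_succ, mul_dvd_mul_iff_left hne,
    hunit.dvd_mul_left] at hδg
  rw [pow_succ _ (k + 1)]
  exact mul_dvd_mul_left _ hδg

end CoefficientwiseDerivation

section EvalExcept

open MvPolynomial

variable {σ K F : Type*} [DecidableEq σ] [Field K] [Field F] [Algebra K F]

/-- The polynomial in one variable obtained by evaluating `f` at `w` in every variable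
except `i`. -/
noncomputable def evalExcept (i : σ) (w : σ → F) : MvPolynomial σ K →ₐ[K] Polynomial F :=
  aeval (Function.update (fun j => Polynomial.C (w j)) i Polynomial.X)

theorem eval_evalExcept (i : σ) (w : σ → F) (x : F) (f : MvPolynomial σ K) :
    (evalExcept i w f).eval x = aeval (Function.update w i x) f := by
  have : ((Polynomial.aeval x).restrictScalars K).comp (evalExcept i w) =
      aeval (Function.update w i x) := by
    ext j
    obtain rfl | hj := eq_or_ne j i <;> simp [evalExcept, *]
  simpa using DFunLike.congr_fun this f

theorem natDegree_evalExcept_le (i : σ) (w : σ → F) {D : σ → ℕ} {f : MvPolynomial σ K}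
    (hf : f ∈ degreeBox K D) : (evalExcept i w f).natDegree ≤ D i := by
  rw [evalExcept, aeval_def, eval₂_eq]
  refine Polynomial.natDegree_sum_le_of_forall_le _ _ fun k hk => ?_
  rw [Polynomial.algebraMap_apply]
  refine (Polynomial.natDegree_C_mul_le _ _).trans <| (Polynomial.natDegree_prod_le _ _).trans ?_
  have hterm : ∀ j ∈ k.support, (Function.update (fun j => Polynomial.C (w j)) i Polynomial.X j ^
      k j).natDegree ≤ if j = i then k i else 0 := fun j _ => by
    obtain rfl | hj := eq_or_ne j i
    · simp
    · simp [hj, ← Polynomial.C_pow, -map_pow]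
  refine (Finset.sum_le_sum hterm).trans ?_
  rw [Finset.sum_ite_eq']
  split_ifs
  · exact mem_degreeBox.1 hf k (mem_support_iff.1 hk) i
  · exact Nat.zero_le _

theorem evalExcept_aeval_X_of_ne {i j : σ} (h : j ≠ i) (w : σ → F) (a : Polynomial K) :
    evalExcept i w (Polynomial.aeval (X j : MvPolynomial σ K) a) =
      Polynomial.C (Polynomial.aeval (w j) a) := by
  rw [← Polynomial.aeval_algHom_apply, ← Polynomial.CAlgHom_apply (R := K),
    ← Polynomial.aeval_algHom_apply]
  simp [evalExcept, h]

theorem coeffDerivation_evalExcept [Fintype σ] (δ : Derivation K F F) (i : σ) (w : σ → F)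
    (f : MvPolynomial σ K) : coeffDerivation δ (evalExcept i w f) =
      ∑ j ∈ Finset.univ.erase i, evalExcept i w (pderiv j f) * Polynomial.C (δ (w j)) := by
  rw [evalExcept, derivation_aeval, ← Finset.add_sum_erase _ _ (Finset.mem_univ i)]
  simp only [Function.update_self, coeffDerivation_X, smul_zero, zero_add]
  refine Finset.sum_congr rfl fun j hj => ?_
  simp [Finset.ne_of_mem_erase hj]

theorem X_sub_C_pow_succ_dvd_evalExcept [Finite σ] [CharZero F] {δ : Derivation K F F} {x : F}
    (hδ : δ x ≠ 0) {i : σ} {w : σ → F} {f : MvPolynomial σ K} {k : ℕ}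
    (hf : (Polynomial.X - Polynomial.C x) ^ (k + 1) ∣ evalExcept i w f)
    (hpderiv : ∀ j ≠ i, w j ∉ Set.range (algebraMap K F) →
      (Polynomial.X - Polynomial.C x) ^ (k + 1) ∣ evalExcept i w (pderiv j f)) :
    (Polynomial.X - Polynomial.C x) ^ (k + 2) ∣ evalExcept i w f := by
  cases nonempty_fintype σ
  refine X_sub_C_pow_succ_dvd_of_dvd_coeffDerivation hδ hf ?_
  rw [coeffDerivation_evalExcept]
  refine Finset.dvd_sum fun j hj => ?_
  by_cases hwj : w j ∈ Set.range (algebraMap K F)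
  · obtain ⟨r, hr⟩ := hwj
    simp [← hr]
  · exact dvd_mul_of_dvd_left (hpderiv j (Finset.ne_of_mem_erase hj) hwj) _

theorem X_sub_C_pow_dvd_evalExcept_pderiv {i j : σ} (hji : j ≠ i) {w : σ → F} {x : F}
    {a : Polynomial K} (ha : Polynomial.aeval (w j) a ≠ 0) {f b : MvPolynomial σ K} {k N : ℕ}
    (hf : (Polynomial.X - Polynomial.C x) ^ k ∣ evalExcept i w f)
    (h : (Polynomial.X - Polynomial.C x) ^ k ∣
      evalExcept i w (Polynomial.aeval (X j) a * pderiv j f - N • (b * f))) :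
    (Polynomial.X - Polynomial.C x) ^ k ∣ evalExcept i w (pderiv j f) := by
  rwa [map_sub, map_nsmul, map_mul, map_mul, evalExcept_aeval_X_of_ne hji,
    dvd_sub_left (dvd_nsmul_of_dvd _ (dvd_mul_of_dvd_right hf _)),
    (Polynomial.isUnit_C.2 ha.isUnit).dvd_mul_left] at h

theorem aeval_piecewise_of_mem_degreeBox {A : Type*} [CommRing A] [Algebra K A] {s : Finset σ}
    {D : σ → ℕ} (hD : ∀ i ∉ s, D i = 0) {f : MvPolynomial σ K} (hf : f ∈ degreeBox K D)
    (z w : σ → A) : aeval (s.piecewise z w) f = aeval z f := by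
  rw [aeval_def, aeval_def, eval₂_eq, eval₂_eq]
  refine Finset.sum_congr rfl fun k hk => congrArg _ (Finset.prod_congr rfl fun i hi => ?_)
  have hi : i ∈ s := by
    by_contra his
    have := mem_degreeBox.1 hf k (mem_support_iff.1 hk) i
    rw [hD i his, Nat.le_zero] at this
    exact Finsupp.mem_support_iff.1 hi this
  rw [Finset.piecewise_eq_of_mem _ _ _ hi]

end EvalExcept

section BaseLocus

open MvPolynomial

variable {σ K F : Type*} [LinearOrder σ] [Field K] [Field F] [Algebra K F]
  {J : Ideal (MvPolynomial σ K)} {m : ℕ} {D : σ → ℕ} {z : σ → F} {T : Finset σ} {i : σ}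
  {a : σ → Polynomial K}

/-- The function `i ↦ ∑ l > i, D l` on `s`, the sum being over `l ∈ s`; it is `0` outside `s`. -/
def tailSum (D : σ → ℕ) (s : Finset σ) : σ → ℕ :=
  s.piecewise (fun i => ∑ l ∈ s with i < l, D l) 0

theorem tailSum_insert (hi : ∀ l ∈ T, l < i) :
    tailSum D (insert i T) = tailSum D T + T.piecewise (fun _ => D i) 0 := by
  have hiT : i ∉ T := fun h => (hi i h).false
  ext l
  by_cases hl : l ∈ T
  · have : i ∉ {l' ∈ T | l < l'} := by simp [hiT]
    simp [tailSum, hl, Finset.filter_insert, hi l hl, Finset.sum_insert this, add_comm]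
  · obtain rfl | hli := eq_or_ne l i
    · have : {l' ∈ T | l < l'} = ∅ := Finset.filter_eq_empty_iff.2 fun l' hl' => (hi l' hl').not_gt
      simp [tailSum, hl, Finset.filter_insert, this]
    · simp [tailSum, hl, hli]

/-- All members of `J` whose degree exceeds `D` by at most `m` times `tailSum D T` vanish at each
point with coordinates `z i` for `i ∈ T` and coordinates in `K` elsewhere. -/
def VanishesOn (J : Ideal (MvPolynomial σ K)) (m : ℕ) (D : σ → ℕ) (z : σ → F) (T : Finset σ) :
    Prop :=
  ∀ α ≤ tailSum D T, ∀ f ∈ J, f ∈ degreeBox K (D + m • α) → ∀ y : σ → K,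
    aeval (T.piecewise z (algebraMap K F ∘ y)) f = 0

theorem VanishesOn.X_sub_C_pow_dvd_evalExcept [CharZero K] [Finite σ] (ha : ∀ i, a i ≠ 0)
    (hadeg : ∀ i, (a i).natDegree ≤ m + 2)
    (hJ : ∀ f ∈ J, ∀ i, Polynomial.aeval (X i) (a i) * pderiv i f ∈ J)
    (hz : ∀ l ∈ insert i T, Transcendental K (z l))
    (h : VanishesOn J m D z (insert i T)) (y : σ → K) (k : ℕ) {α : σ → ℕ}
    (hα : α + T.piecewise (fun _ => k) 0 ≤ tailSum D (insert i T)) {f : MvPolynomial σ K}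
    (hfJ : f ∈ J) (hf : f ∈ degreeBox K (D + m • α)) :
    (Polynomial.X - Polynomial.C (z i)) ^ (k + 1) ∣
      evalExcept i (T.piecewise z (algebraMap K F ∘ y)) f := by
  have : CharZero F := charZero_of_injective_algebraMap (algebraMap K F).injective
  obtain ⟨δ, hδ⟩ := exists_derivation_apply_ne_zero (hz i (T.mem_insert_self i))
  induction k generalizing α f with
  | zero =>
    rw [zero_add, pow_one, Polynomial.dvd_iff_isRoot, Polynomial.IsRoot, eval_evalExcept,
      ← Finset.piecewise_insert]
    exact h α (le_self_add.trans hα) f hfJ hf y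
  | succ k ih =>
    have hαk : α + T.piecewise (fun _ => k) 0 ≤ tailSum D (insert i T) := by
      refine le_trans ?_ hα
      gcongr
      exact T.piecewise_le_piecewise (fun _ => k.le_succ) le_rfl
    have hdvd := ih hαk hfJ hf
    refine X_sub_C_pow_succ_dvd_evalExcept hδ hdvd fun l hli hl => ?_
    have hlT : l ∈ T := by
      by_contra hlT
      exact hl (by simp [hlT])
    have hJl : Polynomial.aeval (X l) (a l) * pderiv l f -
        (D + m • α) l • (Polynomial.aeval (X l) (a l).divX * f) ∈ J :=
      sub_mem (hJ f hfJ l) (nsmul_mem (J.mul_mem_left _ hfJ) _)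
    have hbox := aeval_mul_pderiv_sub_mem_degreeBox l (hadeg l) hf
    have hαl : α + Pi.single l 1 + T.piecewise (fun _ => k) 0 ≤ tailSum D (insert i T) := by
      refine le_trans (fun j => ?_) hα
      by_cases hjT : j ∈ T
      · obtain rfl | hjl := eq_or_ne j l <;> simp [*]; omega
      · have : j ≠ l := fun h => hjT (h ▸ hlT)
        simp [*]
    have hdvdl := ih hαl hJl (by simpa [add_assoc, smul_add, ← Pi.single_smul] using hbox)
    refine X_sub_C_pow_dvd_evalExcept_pderiv hli ?_ hdvd hdvdl
    rw [Finset.piecewise_eq_of_mem _ _ _ hlT]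
    exact transcendental_iff.1 (hz l (Finset.mem_insert_of_mem hlT)) _ |>.mt (ha l)

theorem VanishesOn.of_insert [CharZero K] [Finite σ] (ha : ∀ i, a i ≠ 0)
    (hadeg : ∀ i, (a i).natDegree ≤ m + 2)
    (hJ : ∀ f ∈ J, ∀ i, Polynomial.aeval (X i) (a i) * pderiv i f ∈ J)
    (hz : ∀ l ∈ insert i T, Transcendental K (z l)) (hi : ∀ l ∈ T, l < i)
    (h : VanishesOn J m D z (insert i T)) : VanishesOn J m D z T := by
  intro α hα f hfJ hf y
  have hiT : i ∉ T := fun h => (hi i h).false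
  have hαi : α i = 0 := by simpa [tailSum, hiT] using hα i
  have hdvd := h.X_sub_C_pow_dvd_evalExcept ha hadeg hJ hz y (D i)
    (by rw [tailSum_insert hi]; gcongr) hfJ hf
  have hdeg := natDegree_evalExcept_le i (T.piecewise z (algebraMap K F ∘ y)) hf
  have hzero := Polynomial.eq_zero_of_dvd_of_natDegree_lt hdvd
    (by simpa [Polynomial.natDegree_pow, hαi, Nat.lt_succ_iff] using hdeg)
  rw [← Function.update_eq_self i (T.piecewise z _), ← eval_evalExcept, hzero,
    Polynomial.eval_zero]

theorem eq_zero_of_forall_aeval_eq_zero [CharZero K] [Finite σ] (ha : ∀ i, a i ≠ 0)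
    (hadeg : ∀ i, (a i).natDegree ≤ m + 2)
    (hJ : ∀ f ∈ J, ∀ i, Polynomial.aeval (X i) (a i) * pderiv i f ∈ J) {s : Finset σ}
    (hD : ∀ i ∉ s, D i = 0) (hz : ∀ i ∈ s, Transcendental K (z i))
    (hvanish : ∀ f ∈ J, f ∈ degreeBox K (D + m • tailSum D s) → aeval z f = 0)
    {P : MvPolynomial σ K} (hPJ : P ∈ J) (hP : P ∈ degreeBox K D) : P = 0 := by
  have hstart : VanishesOn J m D z s := fun α hα f hfJ hf y => by
    have hDα : ∀ i ∉ s, (D + m • α) i = 0 := fun i hi => by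
      simpa [tailSum, hi, hD] using Or.inr (hα i)
    rw [aeval_piecewise_of_mem_degreeBox hDα hf]
    exact hvanish f hfJ (degreeBox_mono (by gcongr) hf)
  have hend : VanishesOn J m D z ∅ := by
    clear hD hvanish
    induction s using Finset.induction_on_max with
    | empty => exact hstart
    | insert i T hi ih =>
      exact ih (fun l hl => hz l (Finset.mem_insert_of_mem hl))
        (hstart.of_insert ha hadeg hJ hz hi)
  refine MvPolynomial.funext fun y => ?_
  have := hend 0 (fun i => Nat.zero_le _) P hPJ (by simpa using hP) y
  rw [Finset.piecewise_empty, aeval_algebraMap_apply] at this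
  simpa using this

theorem mem_range_algebraMap_of_isAlgebraic [IsAlgClosed K] {x : F} (hx : IsAlgebraic K x) :
    x ∈ Set.range (algebraMap K F) :=
  minpoly.mem_range_of_degree_eq_one K x
    (IsAlgClosed.degree_eq_one_of_irreducible K (minpoly.irreducible hx.isIntegral))

-- Otherwise the coordinates `X i`, `i ∈ s`, are transcendental in the residue field of `p`.
theorem exists_X_sub_C_mem_of_isPrime [IsAlgClosed K] [CharZero K] [Finite σ] (ha : ∀ i, a i ≠ 0)
    (hadeg : ∀ i, (a i).natDegree ≤ m + 2)
    (hJ : ∀ f ∈ J, ∀ i, Polynomial.aeval (X i) (a i) * pderiv i f ∈ J) {s : Finset σ}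
    (hD : ∀ i ∉ s, D i = 0) {P : MvPolynomial σ K} (hP0 : P ≠ 0) (hPJ : P ∈ J)
    (hP : P ∈ degreeBox K D) (p : Ideal (MvPolynomial σ K)) [p.IsPrime]
    (hp : (J : Set (MvPolynomial σ K)) ∩ degreeBox K (D + m • tailSum D s) ⊆ p) :
    ∃ i ∈ s, ∃ c, X i - C c ∈ p := by
  by_contra! hne
  let z : σ → p.ResidueField := fun i => algebraMap (MvPolynomial σ K) _ (X i)
  have hz : ∀ f : MvPolynomial σ K, aeval z f = algebraMap _ _ f := fun f =>
    (aeval_algebraMap_apply _ X f).trans (by rw [aeval_X_left_apply])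
  refine hP0 (eq_zero_of_forall_aeval_eq_zero ha hadeg hJ hD (z := z) (fun i hi hzi => ?_)
    (fun f hfJ hf => ?_) hPJ hP)
  · obtain ⟨c, hc⟩ := mem_range_algebraMap_of_isAlgebraic hzi
    refine hne i hi c (Ideal.algebraMap_residueField_eq_zero.1 ?_)
    rw [map_sub, ← algebraMap_eq, ← IsScalarTower.algebraMap_apply, hc, sub_self]
  · rw [hz, Ideal.algebraMap_residueField_eq_zero]
    exact hp ⟨hfJ, hf⟩

theorem exists_mem_closure_X_sub_C_mem_span [IsAlgClosed K] [CharZero K] [Finite σ]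
    (ha : ∀ i, a i ≠ 0) (hadeg : ∀ i, (a i).natDegree ≤ m + 2)
    (hJ : ∀ f ∈ J, ∀ i, Polynomial.aeval (X i) (a i) * pderiv i f ∈ J) {s : Finset σ}
    (hD : ∀ i ∉ s, D i = 0) {P : MvPolynomial σ K} (hP0 : P ≠ 0) (hPJ : P ∈ J)
    (hP : P ∈ degreeBox K D) :
    ∃ h ∈ Submonoid.closure {f | ∃ i ∈ s, ∃ c, f = X i - C c},
      h ∈ Ideal.span ((J : Set (MvPolynomial σ K)) ∩ degreeBox K (D + m • tailSum D s)) := by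
  set I := Ideal.span ((J : Set (MvPolynomial σ K)) ∩ degreeBox K (D + m • tailSum D s))
  have hprime : ∀ p ∈ I.minimalPrimes, ∃ f ∈ {f | ∃ i ∈ s, ∃ c, f = X i - C c}, f ∈ p := by
    intro p hp
    have := hp.1.1
    obtain ⟨i, hi, c, hc⟩ := exists_X_sub_C_mem_of_isPrime ha hadeg hJ hD hP0 hPJ hP p
      (Ideal.subset_span.trans hp.1.2)
    exact ⟨_, ⟨i, hi, c, rfl⟩, hc⟩
  choose! g hg hgp using hprime
  have hfin := I.finite_minimalPrimes_of_isNoetherianRing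
  have hprod : ∏ p ∈ hfin.toFinset, g p ∈ I.radical := by
    rw [← Ideal.sInf_minimalPrimes, Ideal.mem_sInf]
    exact fun {p} hp => Ideal.mem_of_dvd _
      (Finset.dvd_prod_of_mem _ (hfin.mem_toFinset.2 hp)) (hgp p hp)
  obtain ⟨k, hk⟩ := hprod
  exact ⟨_, Submonoid.pow_mem _ (Submonoid.prod_mem _ fun p hp =>
    Submonoid.subset_closure (hg p (hfin.mem_toFinset.1 hp))) _, hk⟩

end BaseLocus

section Induction

open MvPolynomial

variable {σ ι K : Type*} [Field K] {d D D₀ D₁ E : σ → ℕ} {ζ : ι → σ → K} {c e t : ι → ℚ}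
  {f g q : MvPolynomial σ K}

namespace Interpolates

theorem of_nonpos (hc : ∀ j, c j ≤ 0) : Interpolates d ζ c 1 D D :=
  ⟨fun f hf => by rwa [one_mul], fun f _ =>
    mem_interpolable_of_mem_indexIdeal fun j => by simp [indexIdeal_of_nonpos (hc j)]⟩

theorem of_nonpos_of_ne {j₀ : ι} (hc : ∀ j ≠ j₀, c j ≤ 0) : Interpolates d ζ c 1 D D := by
  refine ⟨fun f hf => by rwa [one_mul], fun f hf => ⟨f j₀, hf j₀, fun j => ?_⟩⟩
  obtain rfl | hj := eq_or_ne j j₀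
  · simp
  · simp [indexIdeal_of_nonpos (hc j hj)]

theorem anti_thresholds (h : Interpolates d ζ c q D₀ D)
    (hle : ∀ j, indexIdeal d (ζ j) (c j) ≤ indexIdeal d (ζ j) (e j)) :
    Interpolates d ζ e q D₀ D := by
  refine ⟨h.mul_mem, fun f hf => ?_⟩
  obtain ⟨g, hg, hgf⟩ := h.mem_interpolable f hf
  exact ⟨g, hg, fun j => hle j (hgf j)⟩

protected theorem zero : Interpolates d ζ c 0 D₀ D :=
  ⟨fun f _ => by simp, fun f _ => by simpa using const_mem_interpolable (zero_mem _)⟩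

protected theorem add (h : Interpolates d ζ c f D₀ D) (h' : Interpolates d ζ c g D₀ D) :
    Interpolates d ζ c (f + g) D₀ D := by
  refine ⟨fun p hp => ?_, fun p hp => ?_⟩
  · simpa [add_mul] using add_mem (h.mul_mem p hp) (h'.mul_mem p hp)
  · simpa [add_mul, Pi.add_def] using add_mem (h.mem_interpolable p hp) (h'.mem_interpolable p hp)

theorem mul_left (h : Interpolates d ζ c q D₁ D) (hf : f ∈ degreeBox K E) (hD : D₀ + E ≤ D₁) :
    Interpolates d ζ c (f * q) D₀ D := by
  have hmul : ∀ p ∈ degreeBox K D₀, p * f ∈ degreeBox K D₁ := fun p hp =>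
    degreeBox_mono hD (mul_mem_degreeBox hp hf)
  refine ⟨fun p hp => ?_, fun p hp => ?_⟩
  · rw [show f * q * p = q * (p * f) by ring]
    exact h.mul_mem _ (hmul p hp)
  · convert h.mem_interpolable _ fun j => hmul _ (hp j) using 2
    ring

theorem mul_of_mem_indexIdeal (h : Interpolates d ζ c 1 D₀ D) (hf : f ∈ degreeBox K E)
    (hfe : ∀ j, f ∈ indexIdeal d (ζ j) (e j)) : Interpolates d ζ (e + c) f D₀ (D + E) := by
  refine ⟨fun p hp => ?_, fun p hp => ?_⟩
  · have := h.mul_mem p hp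
    rw [one_mul] at this
    exact mul_comm f p ▸ mul_mem_degreeBox this hf
  · obtain ⟨g, hg, hgp⟩ := h.mem_interpolable p hp
    refine ⟨f * g, mul_comm f g ▸ mul_mem_degreeBox hg hf, fun j => ?_⟩
    simpa [mul_sub] using mul_mem_indexIdeal (hfe j) (hgp j)

end Interpolates

variable [DecidableEq σ]

theorem exists_aeval_piecewise_mem_degreeBox (s : Finset σ) (f : MvPolynomial σ K) :
    ∃ B : σ → ℕ, (∀ i ∉ s, B i = 0) ∧ aeval (s.piecewise X 0) f ∈ degreeBox K B := by
  refine ⟨fun i => degreeOf i (aeval (s.piecewise X 0) f), fun i hi => ?_,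
    mem_degreeBox_iff_degreeOf_le.2 fun i => le_rfl⟩
  by_contra h
  obtain ⟨j, -, hj⟩ := mem_vars_bind₁ _ f (mem_vars_iff_degreeOf_ne_zero.2 h)
  by_cases hjs : j ∈ s
  · simp only [hjs, Finset.piecewise_eq_of_mem, vars_X, Finset.mem_singleton] at hj
    exact hi (hj ▸ hjs)
  · simp [hjs] at hj

theorem aeval_piecewise_of_mem_closure {s : Finset σ}
    (hf : f ∈ Submonoid.closure {f | ∃ i ∈ s, ∃ c, f = X i - C c}) :
    aeval (s.piecewise X 0) f = f := by
  induction hf using Submonoid.closure_induction with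
  | mem f hf =>
    obtain ⟨i, hi, c, rfl⟩ := hf
    simp [hi, algebraMap_eq]
  | one => simp
  | mul f g _ _ hf hg => rw [map_mul, hf, hg]

theorem exists_forall_interpolates_of_mem_span {s : Finset σ} (hE : ∀ i ∉ s, E i = 0)
    {W : Set (MvPolynomial σ K)} (hWE : W ⊆ degreeBox K E)
    (hWe : ∀ f ∈ W, ∀ j, f ∈ indexIdeal d (ζ j) (e j)) (hq : q ∈ Ideal.span W) :
    ∃ B : σ → ℕ, (∀ i ∉ s, B i = 0) ∧ ∀ c D₀ D, D₀ + B ≤ D → Interpolates d ζ c 1 D D →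
      Interpolates d ζ (e + c) (aeval (s.piecewise X 0) q) D₀ (D + E) := by
  induction hq using Submodule.span_induction with
  | mem f hf =>
    refine ⟨0, fun _ _ => rfl, fun c D₀ D hD h => ?_⟩
    rw [aeval_piecewise_of_mem_degreeBox hE (hWE hf), aeval_X_left_apply]
    have := h.mul_left (C_mem_degreeBox 1) hD
    rw [C_1, one_mul] at this
    exact this.mul_of_mem_indexIdeal (hWE hf) (hWe f hf)
  | zero => exact ⟨0, fun _ _ => rfl, fun c D₀ D _ _ => by simpa using .zero⟩
  | add f g _ _ hf hg =>
    obtain ⟨B, hB, hf⟩ := hf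
    obtain ⟨B', hB', hg⟩ := hg
    refine ⟨B + B', fun i hi => by simp [hB i hi, hB' i hi], fun c D₀ D hD h => ?_⟩
    rw [map_add]
    exact (hf c D₀ D (le_trans (by gcongr; simp) hD) h).add
      (hg c D₀ D (le_trans (by gcongr; simp) hD) h)
  | smul f g _ hg =>
    obtain ⟨B, hB, hg⟩ := hg
    obtain ⟨B', hB', hf⟩ := exists_aeval_piecewise_mem_degreeBox s f
    refine ⟨B' + B, fun i hi => by simp [hB i hi, hB' i hi], fun c D₀ D hD h => ?_⟩
    rw [smul_eq_mul, map_mul]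
    exact (hg c (D₀ + B') D (by rwa [add_assoc]) h).mul_left hf le_rfl

end Induction

section DysonDegree

open MvPolynomial

variable {σ ι K : Type*} [LinearOrder σ] [Field K] {d : σ → ℕ} {ζ : ι → σ → K} {s : Finset σ}
  {t : ι → ℚ} {m : ℕ}

/-- The degrees `d i + m * ∑ l > i, d l`, for `i` and `l` in `s`, whose product is the bound in
Dyson's lemma up to the factor `∏ i, d i`. -/
def dysonDegree (m : ℕ) (d : σ → ℕ) (s : Finset σ) : σ → ℕ :=
  s.piecewise d 0 + m • tailSum d s

theorem dysonDegree_of_notMem {i : σ} (hi : i ∉ s) : dysonDegree m d s i = 0 := by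
  simp [dysonDegree, tailSum, hi]

theorem le_dysonDegree {i : σ} (hi : i ∈ s) : d i ≤ dysonDegree m d s i := by
  simp [dysonDegree, hi]

theorem dysonDegree_mono : Monotone (dysonDegree m d) := by
  intro s s' hs i
  by_cases hi : i ∈ s
  · simp only [dysonDegree, tailSum, Pi.add_apply, Pi.smul_apply, hi, hs hi,
      Finset.piecewise_eq_of_mem]
    gcongr
  · simp [dysonDegree_of_notMem hi]

theorem nsmul_dysonDegree (N : ℕ) : N • dysonDegree m d s =
    s.piecewise (N • d) 0 + m • tailSum (s.piecewise (N • d) 0) s := by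
  ext i
  by_cases hi : i ∈ s
  · have : ∑ l ∈ s with i < l, s.piecewise (N • d) 0 l = N * ∑ l ∈ s with i < l, d l := by
      rw [Finset.mul_sum]
      exact Finset.sum_congr rfl fun l hl => by simp [(Finset.mem_filter.1 hl).1]
    simp only [dysonDegree, tailSum, Pi.add_apply, Pi.smul_apply, hi,
      Finset.piecewise_eq_of_mem, this, smul_eq_mul]
    ring
  · simp [dysonDegree, tailSum, hi]

theorem IsAdmissible.exists_mem_closure_forall_interpolates [IsAlgClosed K] [CharZero K] [Finite σ]
    [Fintype ι] (hm : Fintype.card ι ≤ m + 2) (h : IsAdmissible d ζ s t) :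
    ∃ N : ℕ, 0 < N ∧ ∃ q ∈ Submonoid.closure {f | ∃ i ∈ s, ∃ c, f = X i - C c},
      ∃ B : σ → ℕ, (∀ i ∉ s, B i = 0) ∧ ∀ c D₀ D, D₀ + B ≤ D → Interpolates d ζ c 1 D D →
        Interpolates d ζ (N • t + c) q D₀ (D + N • dysonDegree m d s) := by
  classical
  obtain ⟨N, hN, P, hPD, hP, hPt⟩ := h
  let a (i : σ) : Polynomial K := ∏ j, (Polynomial.X - Polynomial.C (ζ j i))
  let J : Ideal (MvPolynomial σ K) := ⨅ j, indexIdeal d (ζ j) (N * t j)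
  have hmemJ : ∀ {f}, f ∈ J ↔ ∀ j, f ∈ indexIdeal d (ζ j) (N * t j) := Ideal.mem_iInf
  have hJ : ∀ f ∈ J, ∀ i, Polynomial.aeval (X i) (a i) * pderiv i f ∈ J := by
    refine fun f hf i => hmemJ.2 fun j => ?_
    have haeval : Polynomial.aeval (X i) (a i) =
        (∏ l ∈ Finset.univ.erase j, (X i - C (ζ l i))) * (X i - C (ζ j i)) := by
      rw [Finset.prod_erase_mul _ _ (Finset.mem_univ j), map_prod]
      simp [algebraMap_eq]
    rw [haeval, mul_assoc]
    exact Ideal.mul_mem_left _ _ (X_sub_C_mul_pderiv_mem_indexIdeal i (hmemJ.1 hf j))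
  obtain ⟨q, hq, hspan⟩ := exists_mem_closure_X_sub_C_mem_span (a := a) (m := m) (s := s)
    (fun i => Finset.prod_ne_zero_iff.2 fun j _ => Polynomial.X_sub_C_ne_zero _)
    (fun i => by simpa [a] using hm) hJ (fun i hi => by simp [hi]) hP (hmemJ.2 hPt) hPD
  rw [← nsmul_dysonDegree] at hspan
  obtain ⟨B, hB, hBq⟩ := exists_forall_interpolates_of_mem_span (ζ := ζ) (d := d) (e := N • t)
    (E := N • dysonDegree m d s) (s := s)
    (fun i hi => by simp [dysonDegree_of_notMem hi]) Set.inter_subset_right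
    (fun f hf => by simpa using hmemJ.1 hf.1) hspan
  rw [aeval_piecewise_of_mem_closure hq] at hBq
  exact ⟨N, hN, q, hq, B, hB, hBq⟩

/-- The conclusion of the induction: polynomials in the variables of `s` interpolate each tuple in
their own box to the orders `Θ t`, as soon as the degrees of the box exceed those of
`Θ • dysonDegree m d s` by a constant. -/
def EventuallyInterpolates (m : ℕ) (d : σ → ℕ) (ζ : ι → σ → K) (s : Finset σ) (t : ι → ℚ) : Prop :=
  ∃ C : ℕ, ∀ (Θ : ℕ) (D : σ → ℕ), (∀ i ∉ s, D i = 0) →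
    (∀ i ∈ s, Θ * dysonDegree m d s i + C ≤ D i) → Interpolates d ζ (Θ • t) 1 D D

namespace EventuallyInterpolates

theorem of_nonpos_of_ne {j₀ : ι} (ht : ∀ j ≠ j₀, t j ≤ 0) : EventuallyInterpolates m d ζ s t :=
  ⟨0, fun Θ _ _ _ => .of_nonpos_of_ne fun j hj =>
    smul_nonpos_of_nonneg_of_nonpos Θ.zero_le (ht j hj)⟩

theorem of_forall_mul {N : ℕ} (hN : 0 < N) {C : ℕ} (h : ∀ (θ : ℕ) (D : σ → ℕ), (∀ i ∉ s, D i = 0) →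
      (∀ i ∈ s, θ * N * dysonDegree m d s i + C ≤ D i) →
      Interpolates d ζ ((θ * N) • t) 1 D D) : EventuallyInterpolates m d ζ s t := by
  refine ⟨s.sup (N • dysonDegree m d s) + C, fun Θ D hD hle => ?_⟩
  have hlt : Θ < (Θ / N + 1) * N := by
    simpa [add_mul, mul_comm] using Nat.lt_mul_div_succ Θ hN
  refine (h (Θ / N + 1) D hD fun i hi => le_trans ?_ (hle i hi)).anti_thresholds fun j => ?_
  · calc (Θ / N + 1) * N * dysonDegree m d s i + C
        ≤ (Θ + N) * dysonDegree m d s i + C := by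
          rw [add_one_mul]
          gcongr
          exact Nat.div_mul_le_self Θ N
      _ ≤ Θ * dysonDegree m d s i + (s.sup (N • dysonDegree m d s) + C) := by
          rw [add_mul, add_assoc]
          gcongr
          exact s.le_sup (f := N • dysonDegree m d s) hi
  · obtain ht | ht := le_total 0 (t j)
    · exact indexIdeal_anti (nsmul_le_nsmul_left ht hlt.le)
    · exact le_top.trans_eq
        (indexIdeal_of_nonpos (smul_nonpos_of_nonneg_of_nonpos Θ.zero_le ht)).symm

end EventuallyInterpolates

theorem exists_forall_interpolates_update [DecidableEq ι] [Finite ι]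
    (hlower : ∀ i ∈ s, ∀ j₀, EventuallyInterpolates m d ζ (s.erase i) (lowerAway t 1 j₀)) :
    ∃ C : ℕ, ∀ (Θ : ℕ) (D : σ → ℕ), (∀ i ∉ s, D i = 0) →
      (∀ i ∈ s, Θ * dysonDegree m d s i + C ≤ D i) → ∀ i ∈ s, ∀ j₀, Interpolates d ζ
        (Θ • lowerAway t 1 j₀) 1 (Function.update D i 0) (Function.update D i 0) := by
  cases nonempty_fintype ι
  choose! C hC using hlower
  refine ⟨s.sup fun i => Finset.univ.sup (C i), fun Θ D hD hle i hi j₀ =>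
    hC i hi j₀ Θ _ (fun l hl => ?_) fun l hl => ?_⟩
  · obtain rfl | hli := eq_or_ne l i
    · simp
    · rw [Function.update_of_ne hli]
      exact hD l fun hls => hl (Finset.mem_erase.2 ⟨hli, hls⟩)
  · obtain ⟨hli, hls⟩ := Finset.mem_erase.1 hl
    rw [Function.update_of_ne hli]
    refine le_trans ?_ (hle l hls)
    gcongr
    · exact dysonDegree_mono (s.erase_subset i) l
    · exact Finset.le_sup_of_le hi (Finset.le_sup (Finset.mem_univ j₀))

variable [Nonempty ι]

theorem Interpolates.one_of_mem_closure [Finite σ] [DecidableEq ι] {D D₀ : σ → ℕ} {Θ : ℕ}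
    {q : MvPolynomial σ K}
    (hd : ∀ i, 0 < d i) (hsep : Pairwise fun j j' => ∀ i, ζ j i ≠ ζ j' i) (hD : ∀ i ∉ s, D i = 0)
    (hD₀ : D₀ ≤ D) (hΘ : ∀ i ∈ s, Θ * d i ≤ D₀ i)
    (hlower : ∀ i ∈ s, ∀ j₀, ∀ D', D₀ ≤ D' → D' ≤ D → Interpolates d ζ (Θ • lowerAway t 1 j₀) 1
      (Function.update D' i 0) (Function.update D' i 0))
    (hq : q ∈ Submonoid.closure {f | ∃ i ∈ s, ∃ c, f = X i - C c})
    (h : Interpolates d ζ (Θ • t) q D₀ D) : Interpolates d ζ (Θ • t) 1 D D := by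
  have hsmul : ∀ i j₀, Θ • lowerAway t 1 j₀ = lowerAway (Θ • t) ((Θ • d) i / d i) j₀ := by
    intro i j₀
    have hdi : (d i : ℚ) ≠ 0 := mod_cast (hd i).ne'
    ext j
    obtain rfl | hj := eq_or_ne j j₀
    · simp [lowerAway_self]
    · simp [lowerAway_of_ne hj, hdi, mul_sub]
  replace hlower : ∀ i ∈ s, ∀ j₀, ∀ D', D₀ ≤ D' → D' ≤ D → Interpolates d ζ
      (lowerAway (Θ • t) ((Θ • d) i / d i) j₀) 1
      (Function.update D' i 0) (Function.update D' i 0) :=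
    fun i hi j₀ => hsmul i j₀ ▸ hlower i hi j₀
  have hs : ∀ i, D₀ i < D i → i ∈ s := fun i hi => by
    by_contra his
    simp [hD i his] at hi
  exact .mono_left (p := Θ • d) (fun i hi => hΘ i (hs i hi))
    (fun i hi D' h₀ h₁ j₀ => hlower i (hs i hi) j₀ D' h₀ h₁)
    (.of_mem_closure_mul (p := Θ • d) hΘ (fun i _ j j' hj => hsep hj i)
      (fun i hi j₀ => hlower i hi j₀ D₀ le_rfl hD₀) hq (by rwa [mul_one])) hD₀ le_rfl

namespace IsAdmissible

variable [IsAlgClosed K] [CharZero K] [Finite σ] [Fintype ι]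

theorem eventuallyInterpolates_of_erase [DecidableEq ι] (hd : ∀ i, 0 < d i)
    (hsep : Pairwise fun j j' => ∀ i, ζ j i ≠ ζ j' i) (hm : Fintype.card ι ≤ m + 2)
    (hlower : ∀ i ∈ s, ∀ j₀, EventuallyInterpolates m d ζ (s.erase i) (lowerAway t 1 j₀))
    (h : IsAdmissible d ζ s t) : EventuallyInterpolates m d ζ s t := by
  obtain ⟨N, hN, q, hq, B, hB, hstep⟩ := h.exists_mem_closure_forall_interpolates hm
  obtain ⟨G, hG⟩ := exists_forall_interpolates_update hlower
  let E := dysonDegree m d s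
  let H : ℕ := s.sup (N • E + B)
  have hH : ∀ i ∈ s, N * E i + B i ≤ H := fun i hi => s.le_sup (f := N • E + B) hi
  refine .of_forall_mul hN (C := G + H) fun θ => ?_
  induction θ with
  | zero => exact fun D _ _ => .of_nonpos (by simp)
  | succ θ ih =>
    intro D hD (hle : ∀ i ∈ s, (θ + 1) * N * E i + (G + H) ≤ D i)
    have hEB : N • E + B ≤ D := fun i => by
      by_cases hi : i ∈ s
      · have := hle i hi
        have := hH i hi
        simp only [Pi.add_apply, Pi.smul_apply, smul_eq_mul]
        omega
      · simp [E, dysonDegree_of_notMem hi, hB i hi]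
    have hD₀ : ∀ i ∈ s, (θ + 1) * N * E i + G ≤ (D - (N • E + B)) i := fun i hi => by
      have := hle i hi
      have := hH i hi
      simp only [Pi.sub_apply, Pi.add_apply, Pi.smul_apply, smul_eq_mul]
      omega
    have hprev : Interpolates d ζ ((θ * N) • t) 1 (D - N • E) (D - N • E) := by
      refine ih _ (fun i hi => by simp [hD i hi]) fun i hi => ?_
      have := hle i hi
      have : (θ + 1) * N * E i = θ * N * E i + N * E i := by ring
      exact show θ * N * E i + (G + H) ≤ D i - N * E i by omega
    have hq' := hstep _ (D - (N • E + B)) _ (by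
      rw [← tsub_tsub]
      exact (tsub_add_cancel_of_le (le_tsub_of_add_le_left hEB)).le) hprev
    rw [tsub_add_cancel_of_le (le_self_add.trans hEB), ← add_nsmul, ← one_add_mul,
      add_comm 1] at hq'
    exact .one_of_mem_closure hd hsep hD tsub_le_self
      (fun i hi => (Nat.mul_le_mul_left _ (le_dysonDegree hi)).trans
        (le_self_add.trans (hD₀ i hi)))
      (fun i hi j₀ D' h₀ h₁ => hG _ D' (fun l hl => by simpa [hD l hl] using h₁ l)
        (fun l hl => (hD₀ l hl).trans (h₀ l)) i hi j₀) hq hq'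

theorem eventuallyInterpolates (hd : ∀ i, 0 < d i)
    (hsep : Pairwise fun j j' => ∀ i, ζ j i ≠ ζ j' i) (hm : Fintype.card ι ≤ m + 2)
    (h : IsAdmissible d ζ s t) : EventuallyInterpolates m d ζ s t := by
  classical
  induction s using Finset.strongInduction generalizing t with
  | H s ih =>
    refine h.eventuallyInterpolates_of_erase hd hsep hm fun i hi j₀ => ?_
    obtain ht | hadm := h.erase_lowerAway hd hsep hi j₀
    · exact .of_nonpos_of_ne (j₀ := j₀) fun j hj => by
        simpa [lowerAway_of_ne hj] using ht j hj
    · exact ih _ (Finset.erase_ssubset hi) hadm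

end IsAdmissible

end DysonDegree

section LatticePoints

variable {σ : Type*} [Fintype σ] {d : σ → ℕ} {Θ : ℕ} {t : ℚ} {k : σ →₀ ℕ}

/-- The exponents `k` with `k i < Θ * d i` of weight less than `Θ * t`. Dividing `k i` by `Θ * d i`
turns them into the lattice points of the half-open unit cube where `∑ i, x i < t`. -/
noncomputable def exponentsBelow (d : σ → ℕ) (Θ : ℕ) (t : ℚ) : Finset (σ →₀ ℕ) :=
  open Classical in
  {k ∈ (Fintype.piFinset fun i => Finset.range (Θ * d i)).map
    Finsupp.equivFunOnFinite.symm.toEmbedding | weight d k < Θ * t}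

theorem mem_exponentsBelow :
    k ∈ exponentsBelow d Θ t ↔ (∀ i, k i < Θ * d i) ∧ weight d k < Θ * t := by
  simp [exponentsBelow, Finset.mem_map_equiv]

theorem exists_natCast_le_le_add_one {x : ℝ} {N : ℕ} (hx : 0 ≤ x) (hxN : x ≤ N) (hN : 0 < N) :
    ∃ k < N, (k : ℝ) ≤ x ∧ x ≤ k + 1 := by
  have hle : ⌈x⌉₊ ≤ N := Nat.ceil_le.2 hxN
  refine ⟨⌈x⌉₊ - 1, by omega, ?_,
    (Nat.le_ceil x).trans (mod_cast Nat.le_succ_of_pred_le le_rfl)⟩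
  obtain h | h := Nat.eq_zero_or_pos ⌈x⌉₊
  · simpa [h] using hx
  · rw [Nat.cast_pred h]
    linarith [Nat.ceil_lt_add_one hx]

theorem subset_biUnion_exponentsBelow (hd : ∀ i, 0 < d i) (hΘ : 0 < Θ) :
    {x : σ → ℝ | (∀ i, x i ∈ Set.Icc (0 : ℝ) 1) ∧ ∑ i, x i < t} ⊆
      ⋃ k ∈ exponentsBelow d Θ t,
        Set.Icc (fun i => k i / (Θ * d i : ℝ)) (fun i => (k i + 1) / (Θ * d i : ℝ)) := by
  rintro x ⟨hx, hxt⟩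
  have hdr : ∀ i, (0 : ℝ) < d i := fun i => mod_cast hd i
  have hpos : ∀ i, 0 < (Θ * d i : ℝ) := fun i => mul_pos (mod_cast hΘ) (hdr i)
  have hcell : ∀ i, ∃ k < Θ * d i, (k : ℝ) ≤ x i * (Θ * d i) ∧ x i * (Θ * d i) ≤ k + 1 :=
    fun i => exists_natCast_le_le_add_one (mul_nonneg (hx i).1 (hpos i).le)
      (by simpa using mul_le_of_le_one_left (hpos i).le (hx i).2) (Nat.mul_pos hΘ (hd i))
  choose k hk hkx hxk using hcell
  have hsum : ∑ i, (k i : ℝ) / d i < Θ * t := calc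
    ∑ i, (k i : ℝ) / d i ≤ ∑ i, Θ * x i := by
      refine Finset.sum_le_sum fun i _ => (div_le_iff₀ (hdr i)).2 ?_
      linarith [hkx i]
    _ = Θ * ∑ i, x i := (Finset.mul_sum _ _ _).symm
    _ < Θ * t := mul_lt_mul_of_pos_left hxt (mod_cast hΘ)
  have hweight : weight d (Finsupp.equivFunOnFinite.symm k) < Θ * t := by
    rw [weight_eq_sum, ← Rat.cast_lt (K := ℝ)]
    push_cast
    exact hsum
  refine Set.mem_iUnion₂.2
    ⟨Finsupp.equivFunOnFinite.symm k, mem_exponentsBelow.2 ⟨hk, hweight⟩, fun i => ?_, fun i => ?_⟩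
  · exact (div_le_iff₀ (hpos i)).2 (hkx i)
  · exact (le_div_iff₀ (hpos i)).2 (hxk i)

theorem vol_le_card_exponentsBelow {n : ℕ} {d : Fin n → ℕ} (hd : ∀ i, 0 < d i) (hΘ : 0 < Θ) :
    Vol n t ≤ (exponentsBelow d Θ t).card / ∏ i, (Θ * d i : ℝ) := by
  have hcell : ∀ k : Fin n →₀ ℕ, MeasureTheory.volume (Set.Icc (fun i => k i / (Θ * d i : ℝ))
      (fun i => (k i + 1) / (Θ * d i : ℝ))) = ENNReal.ofReal (∏ i, (Θ * d i : ℝ))⁻¹ := by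
    intro k
    rw [Real.volume_Icc_pi, ← Finset.prod_inv_distrib,
      ENNReal.ofReal_prod_of_nonneg fun i _ => by positivity]
    refine Finset.prod_congr rfl fun i _ => ?_
    rw [← sub_div, add_sub_cancel_left, one_div]
  refine ENNReal.toReal_le_of_le_ofReal (by positivity) ?_
  refine (MeasureTheory.measure_mono (subset_biUnion_exponentsBelow hd hΘ)).trans
    ((MeasureTheory.measure_biUnion_finset_le _ _).trans_eq ?_)
  simp_rw [hcell]
  rw [Finset.sum_const, nsmul_eq_mul, div_eq_mul_inv, ENNReal.ofReal_mul (by positivity),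
    ENNReal.ofReal_natCast]

end LatticePoints

section Counting

open MvPolynomial

variable {σ ι K : Type*} [Field K] {d D : σ → ℕ} {ζ : ι → σ → K} {t : ι → ℚ} {m Θ : ℕ}

theorem coeff_translate_eq_of_sub_mem_indexIdeal {z : σ → K} {a : ℚ} {f g : MvPolynomial σ K}
    (h : f - g ∈ indexIdeal d z a) {k : σ →₀ ℕ} (hk : weight d k < a) :
    coeff k (translate z f) = coeff k (translate z g) := by
  rw [← sub_eq_zero, ← coeff_sub, ← map_sub]
  by_contra hne
  exact hk.not_ge (mem_indexIdeal.1 h k hne)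

theorem exists_mem_degreeBox_coeff_eq {S : Finset (σ →₀ ℕ)} (hS : ∀ k ∈ S, ⇑k ≤ D) (c : S → K) :
    ∃ f ∈ degreeBox K D, ∀ k : S, coeff k.1 f = c k := by
  classical
  refine ⟨∑ k : S, monomial k.1 (c k),
    sum_mem fun k _ => monomial_mem_degreeBox (hS k.1 k.2) _, fun k => ?_⟩
  simp [coeff_sum, coeff_monomial]

theorem translate_symm_mem_degreeBox (z : σ → K) {f : MvPolynomial σ K}
    (hf : f ∈ degreeBox K D) : (translate z).symm f ∈ degreeBox K D := by
  classical
  exact bind₁_mem_degreeBox (fun i => X_sub_C_mem_degreeBox i (z i)) hf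

/-- The map taking a polynomial to its Taylor coefficients at the points `ζ j` whose exponents are
in `S j`. -/
noncomputable def taylorCoeffs (ζ : ι → σ → K) (S : ι → Finset (σ →₀ ℕ)) :
    MvPolynomial σ K →ₗ[K] ∀ j, S j → K :=
  LinearMap.pi fun j => LinearMap.pi fun k => lcoeff K k.1 ∘ₗ (translate (ζ j)).toLinearMap

theorem Interpolates.taylorCoeffs_surjective [Fintype σ]
    (h : Interpolates d ζ (Θ • t) 1 D D) (hD : ∀ i, Θ * d i ≤ D i) :
    Function.Surjective
      (taylorCoeffs ζ (fun j => exponentsBelow d Θ (t j)) ∘ₗ (degreeBox K D).subtype) := by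
  classical
  intro c
  have hS : ∀ j, ∀ k ∈ exponentsBelow d Θ (t j), ⇑k ≤ D := fun j k hk i =>
    ((mem_exponentsBelow.1 hk).1 i).le.trans (hD i)
  choose f hf hfc using fun j => exists_mem_degreeBox_coeff_eq (hS j) (c j)
  obtain ⟨g, hg, hgf⟩ := h.mem_interpolable (fun j => (translate (ζ j)).symm (f j))
    fun j => translate_symm_mem_degreeBox _ (hf j)
  refine ⟨⟨g, hg⟩, funext fun j => funext fun k => ?_⟩
  have hk : weight d k.1 < (Θ • t) j := by simpa using (mem_exponentsBelow.1 k.2).2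
  calc coeff k.1 (translate (ζ j) g)
      = coeff k.1 (translate (ζ j) ((translate (ζ j)).symm (f j))) :=
        coeff_translate_eq_of_sub_mem_indexIdeal (by simpa using hgf j) hk
    _ = c j k := by rw [AlgEquiv.apply_symm_apply, hfc]

theorem Interpolates.sum_card_exponentsBelow_le [Fintype σ] [Fintype ι]
    (h : Interpolates d ζ (Θ • t) 1 D D) (hD : ∀ i, Θ * d i ≤ D i) :
    ∑ j, (exponentsBelow d Θ (t j)).card ≤ ∏ i, (D i + 1) := by
  have hrank := LinearMap.finrank_le_finrank_of_surjective (h.taylorCoeffs_surjective hD)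
  simpa [Module.finrank_pi_fintype, finrank_degreeBox] using hrank

theorem EventuallyInterpolates.sum_vol_le_prod_add [Fintype ι] {n : ℕ} {d : Fin n → ℕ}
    {ζ : ι → Fin n → K} (hd : ∀ i, 0 < d i)
    (h : EventuallyInterpolates m d ζ Finset.univ t) :
    ∃ C : ℕ, ∀ Θ : ℕ, 0 < Θ → ∑ j, Vol n (t j) ≤
      ∏ i, ((dysonDegree m d Finset.univ i : ℝ) / d i + C / d i * (1 / Θ)) := by
  obtain ⟨C, hC⟩ := h
  refine ⟨C + 1, fun Θ hΘ => ?_⟩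
  set e := dysonDegree m d Finset.univ
  have hinterp := hC Θ (fun i => Θ * e i + C) (by simp) fun i _ => le_rfl
  have hcard := hinterp.sum_card_exponentsBelow_le fun i =>
    (Nat.mul_le_mul_left Θ (le_dysonDegree (Finset.mem_univ i))).trans (Nat.le_add_right _ _)
  calc ∑ j, Vol n (t j) ≤ ∑ j, (exponentsBelow d Θ (t j)).card / ∏ i, (Θ * d i : ℝ) :=
        Finset.sum_le_sum fun j _ => vol_le_card_exponentsBelow hd hΘ
    _ = (∑ j, (exponentsBelow d Θ (t j)).card : ℕ) / ∏ i, (Θ * d i : ℝ) := by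
        rw [← Finset.sum_div, Nat.cast_sum]
    _ ≤ (∏ i, (Θ * e i + C + 1) : ℕ) / ∏ i, (Θ * d i : ℝ) := by gcongr
    _ = ∏ i, ((e i : ℝ) / d i + (C + 1 : ℕ) / d i * (1 / Θ)) := by
        rw [Nat.cast_prod, ← Finset.prod_div_distrib]
        refine Finset.prod_congr rfl fun i _ => ?_
        have := (hd i).ne'
        push_cast
        field_simp
        ring

theorem EventuallyInterpolates.sum_vol_le_prod [Fintype ι] {n : ℕ} {d : Fin n → ℕ}
    {ζ : ι → Fin n → K} (hd : ∀ i, 0 < d i)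
    (h : EventuallyInterpolates m d ζ Finset.univ t) :
    ∑ j, Vol n (t j) ≤ ∏ i, (dysonDegree m d Finset.univ i : ℝ) / d i := by
  obtain ⟨C, hC⟩ := h.sum_vol_le_prod_add hd
  have hlim : Filter.Tendsto
      (fun Θ : ℕ => ∏ i, ((dysonDegree m d Finset.univ i : ℝ) / d i + C / d i * (1 / Θ)))
      Filter.atTop (nhds (∏ i, ((dysonDegree m d Finset.univ i : ℝ) / d i + C / d i * 0))) :=
    tendsto_finsetProd _ fun i _ =>
      tendsto_const_nhds.add (tendsto_const_nhds.mul tendsto_one_div_atTop_nhds_zero_nat)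
  simp only [mul_zero, add_zero] at hlim
  exact ge_of_tendsto hlim ((Filter.eventually_gt_atTop 0).mono hC)

end Counting

section BaseChange

open MvPolynomial

variable {σ R S : Type*} [CommRing R] [CommRing S] {d D : σ → ℕ} {f : MvPolynomial σ R}

theorem map_mem_degreeBox (φ : R →+* S) (hf : f ∈ degreeBox R D) : map φ f ∈ degreeBox S D :=
  mem_degreeBox.2 fun k hk => mem_degreeBox.1 hf k fun h => hk (by simp [coeff_map, h])

theorem translate_map (φ : R →+* S) (z : σ → R) (f : MvPolynomial σ R) :
    translate (φ ∘ z) (map φ f) = map φ (translate z f) := by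
  simp [translate_eq_bind₁, map_bind₁]

theorem map_mem_indexIdeal (φ : R →+* S) {z : σ → R} {a : ℚ} (hf : f ∈ indexIdeal d z a) :
    map φ f ∈ indexIdeal d (φ ∘ z) a :=
  mem_indexIdeal.2 fun k hk => mem_indexIdeal.1 hf k fun h => hk (by
    simp [translate_map, coeff_map, h])

end BaseChange

section Main

open MvPolynomial

theorem exists_polyIndex_eq_and_mem_indexIdeal {R : Type*} [CommRing R] {n : ℕ} (d : Fin n → ℕ)
    {P : MvPolynomial (Fin n) R} (hP : P ≠ 0) (z : Fin n → R) :
    ∃ q : ℚ, polyIndex d P z = q ∧ P ∈ indexIdeal d z q := by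
  have hindex : polyIndex d P z =
      sInf ((fun k => (weight d k : ℝ)) '' {k | coeff k (translate z P) ≠ 0}) := by
    simp [polyIndex, translate_eq_bind₁, Set.image, weight_eq_sum, eq_comm]
  have hfin : ((fun k => (weight d k : ℝ)) '' {k | coeff k (translate z P) ≠ 0}).Finite :=
    ((translate z P).support.finite_toSet.subset fun k hk => mem_support_iff.2 hk).image _
  obtain ⟨k, hk⟩ := exists_coeff_ne_zero ((translate z).map_ne_zero_iff.2 hP)
  obtain ⟨k₀, -, hk₀⟩ := Set.Nonempty.csInf_mem ⟨_, Set.mem_image_of_mem _ hk⟩ hfin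
  refine ⟨weight d k₀, hindex.trans hk₀.symm, mem_indexIdeal.2 fun k hk => ?_⟩
  exact Rat.cast_le.1 (hk₀.le.trans (csInf_le hfin.bddBelow (Set.mem_image_of_mem _ hk)))

theorem isAdmissible_univ_of_mem_indexIdeal {σ ι K : Type*} [Fintype σ] [DecidableEq σ] [Field K]
    {d : σ → ℕ} {ζ : ι → σ → K} {t : ι → ℚ} {P : MvPolynomial σ K} (hP : P ≠ 0)
    (hdeg : P ∈ degreeBox K d) (hindex : ∀ j, P ∈ indexIdeal d (ζ j) (t j)) :
    IsAdmissible d ζ Finset.univ t :=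
  ⟨1, one_pos, P, by simpa using hdeg, hP, by simpa using hindex⟩

theorem dysonDegree_sub_two_univ_div {n : ℕ} {d : Fin n → ℕ} {i : Fin n} (hd : 0 < d i) (M : ℕ) :
    (dysonDegree (M - 2) d Finset.univ i : ℝ) / d i =
      1 + max ((M : ℝ) - 2) 0 * ∑ l ∈ Finset.Ioi i, (d l : ℝ) / d i := by
  have hmax : ((M - 2 : ℕ) : ℝ) = max ((M : ℝ) - 2) 0 := by
    obtain h | h := le_total 2 M
    · rw [Nat.cast_sub h, Nat.cast_two, max_eq_left (sub_nonneg.2 (mod_cast h))]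
    · rw [Nat.sub_eq_zero_of_le h, Nat.cast_zero, max_eq_right (sub_nonpos.2 (mod_cast h))]
  have hfilter : ({l | i < l} : Finset (Fin n)) = Finset.Ioi i := by ext; simp
  have hdi : (d i : ℝ) ≠ 0 := mod_cast hd.ne'
  simp only [dysonDegree, tailSum, Pi.add_apply, Pi.smul_apply, Finset.piecewise_univ, smul_eq_mul,
    hfilter]
  push_cast
  rw [hmax, ← Finset.sum_div]
  field_simp

end Main

end DysonLemma

open DysonLemma MvPolynomial in
theorem dyson_lemma_general {K : Type*} [Field K] [CharZero K] {ι : Type*} [Fintype ι] {n : ℕ}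
    (ζ : ι → Fin n → K) (d : Fin n → ℕ) (hdpos : ∀ i, 0 < d i) (t : ι → ℝ)
    (P : MvPolynomial (Fin n) K) (hP : P ≠ 0)
    (hsep : Pairwise fun j j' => ∀ i, ζ j i ≠ ζ j' i)
    (hdeg : ∀ i, degreeOf i P ≤ d i) (hindex : ∀ j, polyIndex d P (ζ j) = t j) :
    ∑ j, Vol n (t j) ≤
      ∏ i, (1 + max ((Fintype.card ι : ℝ) - 2) 0 * ∑ l ∈ Finset.Ioi i, (d l : ℝ) / d i) := by
  simp_rw [← dysonDegree_sub_two_univ_div (hdpos _)]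
  cases isEmpty_or_nonempty ι with
  | inl _ => rw [Finset.univ_eq_empty, Finset.sum_empty]; positivity
  | inr _ =>
    choose q hq hPq using fun j => exists_polyIndex_eq_and_mem_indexIdeal d hP (ζ j)
    let φ := algebraMap K (AlgebraicClosure K)
    have : CharZero (AlgebraicClosure K) := charZero_of_injective_ringHom φ.injective
    have hadm : IsAdmissible d (fun j => φ ∘ ζ j) Finset.univ q :=
      isAdmissible_univ_of_mem_indexIdeal ((map_ne_zero_iff _ (map_injective φ φ.injective)).2 hP)
        (map_mem_degreeBox φ (mem_degreeBox_iff_degreeOf_le.2 hdeg))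
        fun j => map_mem_indexIdeal φ (hPq j)
    have hev := hadm.eventuallyInterpolates hdpos (m := Fintype.card ι - 2)
      (fun j j' hj i h => hsep hj i (φ.injective h)) (by omega)
    simpa only [← hindex, hq] using hev.sum_vol_le_prod hdpos

/-- **Dyson's lemma** of Esnault–Viehweg (Theorem 10.5), over an arbitrary field
of characteristic zero: if `P ≠ 0` has degree at most `d_i` in `x_i`, the points
`ζ_1, …, ζ_M ∈ Kⁿ` differ in every coordinate, `d₁ ≥ ⋯ ≥ dₙ > 0`, and
`t_d(P, ζ_j) = t_j ≥ 0`, then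
`Σ_j Vol_n(t_j) ≤ ∏_i (1 + max {M−2, 0} · Σ_{l>i} d_l/d_i)`. -/
theorem dyson_lemma {K : Type*} [Field K] [CharZero K]
    (n M : ℕ) (hn : 1 ≤ n) (hM : 1 ≤ M)
    (ζ : Fin M → Fin n → K)
    (d : Fin n → ℕ) (hdpos : ∀ i, 0 < d i)
    (hdmono : ∀ i i' : Fin n, i ≤ i' → d i' ≤ d i)
    (t : Fin M → ℝ) (ht : ∀ j, 0 ≤ t j)
    (P : MvPolynomial (Fin n) K) (hP : P ≠ 0)
    (hsep : ∀ j j' : Fin M, j ≠ j' → ∀ i : Fin n, ζ j i ≠ ζ j' i)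
    (hdeg : ∀ i : Fin n, MvPolynomial.degreeOf i P ≤ d i)
    (hindex : ∀ j : Fin M, polyIndex d P (ζ j) = t j) :
    ∑ j : Fin M, Vol n (t j) ≤
      ∏ i : Fin n,
        (1 + max ((M : ℝ) - 2) 0 * ∑ l ∈ Finset.Ioi i, (d l : ℝ) / (d i : ℝ)) := by
  simpa using dyson_lemma_general ζ d hdpos t P hP hsep hdeg hindex
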